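/- arXiv:math/0605002 — 2 statements merged into one kernel-verified Lean document; each statement's English description precedes it below -/
import Mathlib

section
/- There exist constants c, C > 0 (independent of the dimension) such that for every n ≥ 2, every point p on the unit sphere of ℝⁿ, and every δ ∈ (0,1], the spherical cap A_δ := {y ∈ Y : ‖y − p‖ ≤ δ} satisfies c·δ^{1/3} ≤ ω_∞(A_δ) ≤ C·δ^{1/3}, where ω_∞ denotes the ∞-harmonic measure from the center 0 of the unit ball. -/
open Metric Set

noncomputable section

/-- Euclidean space `ℝⁿ`. -/
abbrev Euc (n : ℕ) := EuclideanSpace ℝ (Fin n)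

/-- The (possibly infinite) Lipschitz constant of `u` on `S`:
`Lip_S u = sup {|u x - u y| / ‖x - y‖ : x, y ∈ S, x ≠ y}`. -/
def lipOn {X : Type*} [MetricSpace X] (u : X → ℝ) (S : Set X) : ENNReal :=
  ⨆ (x : X) (_ : x ∈ S) (y : X) (_ : y ∈ S) (_ : x ≠ y),
    ENNReal.ofReal (|u x - u y| / dist x y)

/-- The `∞`-harmonic measure of `A` from the center `0` of the closed unit ball
`X` of `ℝⁿ` (with `Y = ∂X` the unit sphere): the infimum of `u 0` over nonnegative
functions `u` that are Lipschitz on `X`, absolutely minimal on `X \ Y` (i.e.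
`Lip_V u = Lip_{∂V} u` for every open `V` contained in the open unit ball), and
satisfy `u ≥ 1` on `A`. -/
def omegaInf (n : ℕ) (A : Set (Euc n)) : ℝ :=
  sInf {t : ℝ | ∃ u : Euc n → ℝ,
    (∀ x ∈ closedBall (0 : Euc n) 1, 0 ≤ u x) ∧
    (∃ K : NNReal, LipschitzOnWith K u (closedBall (0 : Euc n) 1)) ∧
    (∀ V : Set (Euc n), IsOpen V → V ⊆ ball (0 : Euc n) 1 →
      lipOn u V = lipOn u (frontier V)) ∧
    (∀ x ∈ A, 1 ≤ u x) ∧ t = u 0}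

/-!
Aronsson's function `G` with pole at `0` and axis `p` is homogeneous of degree `-1/3`, and it is
absolutely minimal away from its pole because its gradient lines are explicit curves along which
the length of the gradient is constant. Following such a line up (then the axis towards the pole)
and down, one meets the frontier of any open set whose closure misses the pole, so a Lipschitz
bound for `G` on the frontier bounds the gradient inside.

For the upper bound, `20 δ^(1/3) G((1 + δ) p - x)` is nonnegative in the ball and at least `1` on
the cap, so it competes in the infimum, and its value at the center is of order `δ^(1/3)`.

For the lower bound, comparison with the cone `1 - ‖x - p‖ / δ` shows that every competitor `u` is
at least `1/2` in the unit ball at distance `δ/2` from `p`. Put the pole of `G` at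
`(1 + δ² / 400) p`: then `δ^(1/3) G - u` is at most `δ^(1/3) / 3` there, and also on the rest of
the unit sphere, where `G` is small because the pole is so close to the sphere. By the comparison
principle for absolutely minimal functions, proved by the finite-difference argument of Armstrong
and Smart, the same bound holds at the center, where `G` is close to `16^(-1/3) > 1/3`.
-/

section

open scoped NNReal InnerProductSpace Pointwise

section LipschitzConstant

variable {X : Type*} [MetricSpace X] {u v : X → ℝ} {S : Set X}

lemma lipOn_le_coe_iff {L : ℝ≥0} : lipOn u S ≤ L ↔ LipschitzOnWith L u S := by
  simp only [lipOn, iSup_le_iff, lipschitzOnWith_iff_dist_le_mul, Real.dist_eq]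
  refine forall₄_congr fun x _ y _ ↦ ?_
  rcases eq_or_ne x y with rfl | hxy
  · simp
  · simp only [ne_eq, hxy, not_false_eq_true, forall_const, ← ENNReal.ofReal_coe_nnreal,
      ENNReal.ofReal_le_ofReal_iff L.coe_nonneg, div_le_iff₀ (dist_pos.2 hxy)]

lemma lipOn_congr (h : EqOn u v S) : lipOn u S = lipOn v S := by
  refine biSup_congr fun x hx ↦ biSup_congr fun y hy ↦ ?_
  rw [h hx, h hy]

lemma lipOn_const_mul (c : ℝ) : lipOn (fun x ↦ c * u x) S = ‖c‖ₑ * lipOn u S := by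
  simp only [lipOn, ENNReal.mul_iSup, ← mul_sub, abs_mul, mul_div_assoc,
    ENNReal.ofReal_mul (abs_nonneg c), ← Real.enorm_eq_ofReal_abs]

lemma lipOn_const (c : ℝ) : lipOn (fun _ : X ↦ c) S = 0 := by
  simp [lipOn]

lemma lipOn_comp_isometryEquiv (e : X ≃ᵢ X) : lipOn (u ∘ e) S = lipOn u (e '' S) := by
  simp only [lipOn, iSup_image, Function.comp_apply, e.dist_eq, e.injective.ne_iff]

end LipschitzConstant

/-- `u` is absolutely minimal (AM) on `U`: it has no larger Lipschitz constant on an open subset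
of `U` than on the frontier of that subset. -/
def IsAbsolutelyMinimalOn {X : Type*} [MetricSpace X] (u : X → ℝ) (U : Set X) : Prop :=
  ∀ V : Set X, IsOpen V → V ⊆ U → lipOn u V = lipOn u (frontier V)

lemma isAbsolutelyMinimalOn_of_lipschitzOnWith {X : Type*} [MetricSpace X] {u : X → ℝ}
    {U : Set X} (hu : ContinuousOn u (closure U))
    (h : ∀ V : Set X, IsOpen V → V ⊆ U → ∀ L : ℝ≥0,
      LipschitzOnWith L u (frontier V) → LipschitzOnWith L u V) :
    IsAbsolutelyMinimalOn u U := by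
  intro V hV hVU
  refine ENNReal.eq_of_forall_le_nnreal_iff fun L ↦ ?_
  rw [lipOn_le_coe_iff, lipOn_le_coe_iff]
  exact ⟨fun hL ↦ (hL.closure (hu.mono (closure_mono hVU))).mono frontier_subset_closure,
    h V hV hVU L⟩

lemma isAbsolutelyMinimalOn_const {X : Type*} [MetricSpace X] (c : ℝ) (U : Set X) :
    IsAbsolutelyMinimalOn (fun _ ↦ c) U := fun V _ _ ↦ by
  rw [lipOn_const, lipOn_const]

namespace IsAbsolutelyMinimalOn

variable {X : Type*} [MetricSpace X] {u v : X → ℝ} {U V : Set X}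

lemma lipschitzOnWith (h : IsAbsolutelyMinimalOn u U) (hV : IsOpen V) (hVU : V ⊆ U) {L : ℝ≥0}
    (hL : LipschitzOnWith L u (frontier V)) : LipschitzOnWith L u V := by
  rwa [← lipOn_le_coe_iff, h V hV hVU, lipOn_le_coe_iff]

lemma mono (h : IsAbsolutelyMinimalOn u U) (hVU : V ⊆ U) : IsAbsolutelyMinimalOn u V :=
  fun W hW hWV ↦ h W hW (hWV.trans hVU)

lemma congr (h : IsAbsolutelyMinimalOn u U) (huv : EqOn u v (closure U)) :
    IsAbsolutelyMinimalOn v U := by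
  intro V hV hVU
  have hcl : closure V ⊆ closure U := closure_mono hVU
  rw [← lipOn_congr (huv.mono (subset_closure.trans hcl)),
    ← lipOn_congr (huv.mono (frontier_subset_closure.trans hcl)), h V hV hVU]

lemma const_mul (h : IsAbsolutelyMinimalOn u U) (c : ℝ) :
    IsAbsolutelyMinimalOn (fun x ↦ c * u x) U := fun V hV hVU ↦ by
  rw [lipOn_const_mul, lipOn_const_mul, h V hV hVU]

lemma neg (h : IsAbsolutelyMinimalOn u U) : IsAbsolutelyMinimalOn (-u) U := by
  simpa only [neg_one_mul, ← Pi.neg_def] using h.const_mul (-1)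

lemma comp_isometryEquiv (h : IsAbsolutelyMinimalOn u U) (e : X ≃ᵢ X) :
    IsAbsolutelyMinimalOn (u ∘ e) (e ⁻¹' U) := fun V hV hVU ↦ by
  have hfr : e '' frontier V = frontier (e '' V) := e.toHomeomorph.image_frontier V
  rw [lipOn_comp_isometryEquiv, lipOn_comp_isometryEquiv, hfr]
  exact h _ (e.toHomeomorph.isOpenMap V hV) (image_subset_iff.2 hVU)

lemma exists_continuous_eqOn_closure (h : IsAbsolutelyMinimalOn u U)
    (hu : ContinuousOn u (closure U)) :
    ∃ v, Continuous v ∧ EqOn v u (closure U) ∧ IsAbsolutelyMinimalOn v U := by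
  obtain ⟨v, hv⟩ := ContinuousMap.exists_restrict_eq isClosed_closure
    ⟨(closure U).domRestrict u, hu.domRestrict⟩
  have huv : EqOn v u (closure U) := fun x hx ↦ DFunLike.congr_fun hv ⟨x, hx⟩
  exact ⟨v, v.continuous, huv, h.congr huv.symm⟩

end IsAbsolutelyMinimalOn

section ConeComparison

lemma exists_mem_frontier_of_isPreconnected {X : Type*} [TopologicalSpace X] {S V : Set X}
    (hS : IsPreconnected S) (hV : IsOpen V) (hSV : (S ∩ V).Nonempty) (hSV' : (S \ V).Nonempty) :
    (S ∩ frontier V).Nonempty := by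
  by_contra! hempty
  obtain ⟨x, hxS, hxV⟩ := hSV'
  refine hxV (hS.subset_of_closure_inter_subset hV hSV (fun y ⟨hycl, hyS⟩ ↦ ?_) hxS)
  by_contra hyV
  exact hempty.le ⟨hyS, hV.frontier_eq ▸ ⟨hycl, hyV⟩⟩

lemma exists_mem_segment_frontier {E : Type*} [AddCommGroup E] [Module ℝ E] [TopologicalSpace E]
    [IsTopologicalAddGroup E] [ContinuousSMul ℝ E] {V : Set E} (hV : IsOpen V) {x y : E}
    (hx : x ∈ V) (hy : y ∉ V) : ∃ z ∈ segment ℝ x y, z ∈ frontier V :=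
  exists_mem_frontier_of_isPreconnected (convex_segment x y).isPreconnected hV
    ⟨x, left_mem_segment ℝ x y, hx⟩ ⟨y, right_mem_segment ℝ x y, hy⟩

lemma eq_of_mem_frontier_inter_lt {X : Type*} [TopologicalSpace X] {u g : X → ℝ} {V : Set X}
    (hV : IsOpen V) (hu : Continuous u) (hg : Continuous g) (h : ∀ x ∈ frontier V, g x ≤ u x)
    {x : X} (hx : x ∈ frontier (V ∩ {x | u x < g x})) : u x = g x := by
  rw [(hV.inter (isOpen_lt hu hg)).frontier_eq] at hx
  refine le_antisymm (closure_lt_subset_le hu hg (closure_mono inter_subset_right hx.1)) ?_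
  by_cases hxV : x ∈ V
  · exact not_lt.1 fun hlt ↦ hx.2 ⟨hxV, hlt⟩
  · exact h x (hV.frontier_eq ▸ ⟨closure_mono inter_subset_left hx.1, hxV⟩)

lemma frontier_ball_diff_center_subset {X : Type*} [MetricSpace X] (x : X) (r : ℝ) :
    frontier (ball x r \ {x}) ⊆ insert x (sphere x r) := by
  intro y hy
  rw [(isOpen_ball.sdiff isClosed_singleton).frontier_eq] at hy
  refine or_iff_not_imp_left.2 fun hyx ↦ ?_
  have hle : y ∈ closedBall x r := closure_ball_subset_closedBall (closure_mono sdiff_subset hy.1)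
  exact hle.antisymm (not_lt.1 fun hlt ↦ hy.2 ⟨hlt, hyx⟩)

variable {E : Type*} [NormedAddCommGroup E] [NormedSpace ℝ E] {u : E → ℝ} {U V : Set E}

theorem IsAbsolutelyMinimalOn.cone_le (h : IsAbsolutelyMinimalOn u V)
    (hu : ContinuousOn u (closure V)) (hV : IsOpen V) {z : E} (hz : z ∉ V) {c : ℝ} {L : ℝ≥0}
    (hb : ∀ x ∈ frontier V, c - L * dist x z ≤ u x) {x : E} (hx : x ∈ V) :
    c - L * dist x z ≤ u x := by
  obtain ⟨v, hv, hvu, hvAM⟩ := h.exists_continuous_eqOn_closure hu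
  have hbv : ∀ x ∈ frontier V, c - L * dist x z ≤ v x := fun x hx ↦
    (hb x hx).trans_eq (hvu (frontier_subset_closure hx)).symm
  rw [← hvu (subset_closure hx)]
  by_contra! hlt
  have hcone : LipschitzWith L (fun x ↦ c - L * dist x z) := by
    refine .of_dist_le_mul fun x y ↦ ?_
    rw [Real.dist_eq, sub_sub_sub_cancel_left, ← mul_sub, abs_mul, abs_of_nonneg L.coe_nonneg,
      dist_comm x y]
    gcongr
    exact abs_dist_sub_le y x z
  set W := V ∩ {x | v x < c - L * dist x z}
  have hWo : IsOpen W := hV.inter (isOpen_lt hv hcone.continuous)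
  have hfr : EqOn (fun x ↦ c - L * dist x z) v (frontier W) := fun y hy ↦
    (eq_of_mem_frontier_inter_lt hV hv hcone.continuous hbv hy).symm
  have hLip : LipschitzOnWith L v (closure W) :=
    (hvAM.lipschitzOnWith hWo inter_subset_left
      (lipOn_le_coe_iff.1 (lipOn_congr hfr ▸ lipOn_le_coe_iff.2 hcone.lipschitzOnWith))).closure
        hv.continuousOn
  obtain ⟨w, hw, hwfr⟩ := exists_mem_segment_frontier hWo ⟨hx, hlt⟩ fun hzW ↦ hz hzW.1
  have hslope := (abs_le.1 (hLip.dist_le_mul w (frontier_subset_closure hwfr) x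
    (subset_closure ⟨hx, hlt⟩))).2
  have hdist : (L : ℝ) * dist x w + L * dist w z = L * dist x z := by
    rw [← mul_add, dist_add_dist_of_mem_segment hw]
  rw [← hfr hwfr, dist_comm w x] at hslope
  linarith

theorem IsAbsolutelyMinimalOn.le_cone_of_mem_closedBall (h : IsAbsolutelyMinimalOn u U)
    (hu : Continuous u) {x : E} {r : ℝ} (hball : ball x r ⊆ U) {L : ℝ≥0}
    (hb : ∀ y ∈ sphere x r, u y ≤ u x + L * r) {y : E} (hy : y ∈ closedBall x r) :
    u y ≤ u x + L * dist y x := by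
  have hsphere : ∀ y ∈ insert x (sphere x r), -u x - L * dist y x ≤ -u y := by
    rintro y (rfl | hy)
    · simp
    · rw [mem_sphere.1 hy]
      linarith [hb y hy]
  suffices -u x - L * dist y x ≤ -u y by linarith
  by_cases hyV : y ∈ ball x r \ {x}
  · exact (h.neg.mono (sdiff_subset.trans hball)).cone_le hu.neg.continuousOn
      (isOpen_ball.sdiff isClosed_singleton) (fun hx ↦ hx.2 rfl)
      (fun w hw ↦ hsphere w (frontier_ball_diff_center_subset x r hw)) hyV
  · refine hsphere y (or_iff_not_imp_left.2 fun hyx ↦ ?_)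
    exact le_antisymm hy (not_lt.1 fun hlt ↦ hyV ⟨hlt, hyx⟩)

end ConeComparison

section ComparisonPrinciple

/-- The maximum of `u` over the closed ball of radius `ε`, as a function of the center: the
operation turning an absolutely minimal function into a discretely subharmonic one. -/
def ballMax {X : Type*} [PseudoMetricSpace X] (u : X → ℝ) (ε : ℝ) (x : X) : ℝ :=
  sSup (u '' closedBall x ε)

/-- The finite-difference analogue `2 f ≤ max_{B(x, ε)} f + min_{B(x, ε)} f` at `x` of
`∞`-subharmonicity, with the maximum and the minimum expressed by quantifiers. -/
def IsDiscreteSubharmonicAt {X : Type*} [PseudoMetricSpace X] (ε : ℝ) (f : X → ℝ) (x : X) :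
    Prop :=
  ∃ z ∈ closedBall x ε, ∀ y ∈ closedBall x ε, 2 * f x ≤ f z + f y

lemma exists_forall_dist_le_lt_add {X : Type*} [PseudoMetricSpace X] {u : X → ℝ} {K : Set X}
    (hK : IsCompact K) (hu : Continuous u) {κ : ℝ} (hκ : 0 < κ) :
    ∃ r > 0, ∀ y ∈ K, ∀ z, dist z y ≤ r → u z < u y + κ := by
  obtain ⟨r, hr, hsub⟩ := Metric.mem_uniformity_dist.1 <|
    hK.uniformContinuousAt_of_continuousAt u (fun y _ ↦ hu.continuousAt) (dist_mem_uniformity hκ)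
  refine ⟨r / 2, half_pos hr, fun y hy z hzy ↦ ?_⟩
  have hclose : dist (u y) (u z) < κ := hsub (by rw [dist_comm]; linarith) hy
  linarith [(abs_lt.1 hclose).1]

section ProperSpace

variable {X : Type*} [PseudoMetricSpace X] [ProperSpace X] {u : X → ℝ} {ε : ℝ} {x y : X}

lemma exists_eq_ballMax (hu : Continuous u) (hε : 0 ≤ ε) (x : X) :
    ∃ y ∈ closedBall x ε, u y = ballMax u ε x :=
  ((isCompact_closedBall x ε).image hu).sSup_mem ((nonempty_closedBall.2 hε).image u)

lemma le_ballMax (hu : Continuous u) (hy : y ∈ closedBall x ε) : u y ≤ ballMax u ε x :=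
  le_csSup ((isCompact_closedBall x ε).image hu).bddAbove (mem_image_of_mem u hy)

end ProperSpace

variable {E : Type*} [NormedAddCommGroup E] {f h u v : E → ℝ} {ε : ℝ} {x : E} {U Ω : Set E}

lemma continuous_ballMax [ProperSpace E] (hu : Continuous u) (ε : ℝ) :
    Continuous (ballMax u ε) := by
  have htranslate : ballMax u ε = fun x ↦ sSup ((fun z ↦ u (x + z)) '' closedBall 0 ε) := by
    funext x
    rw [ballMax, ← image_image u (x + ·), ← singleton_add, singleton_add_closedBall, add_zero]
  rw [htranslate]
  exact (isCompact_closedBall 0 ε).continuous_sSup (by fun_prop)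

lemma IsDiscreteSubharmonicAt.eq_of_isMax (hf : IsDiscreteSubharmonicAt ε f x)
    (hh : IsDiscreteSubharmonicAt ε h x)
    (hmax : ∀ y ∈ closedBall x ε, f y + h y ≤ f x + h x)
    (hfmax : ∀ y ∈ closedBall x ε, f y + h y = f x + h x → f y ≤ f x) :
    ∀ y ∈ closedBall x ε, f y = f x ∧ h y = h x := by
  obtain ⟨z, hz, hfz⟩ := hf
  obtain ⟨w, hw, hhw⟩ := hh
  have hzmax : f z ≤ f x := hfmax z hz <| by
    linarith [hfz w hw, hhw z hz, hmax z hz, hmax w hw]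
  have hfge : ∀ y ∈ closedBall x ε, f x ≤ f y := fun y hy ↦ by linarith [hfz y hy]
  have hhle : ∀ y ∈ closedBall x ε, h y ≤ h x := fun y hy ↦ by linarith [hfge y hy, hmax y hy]
  have hhge : ∀ y ∈ closedBall x ε, h x ≤ h y := fun y hy ↦ by linarith [hhw y hy, hhle w hw]
  exact fun y hy ↦ ⟨by linarith [hfge y hy, hmax y hy, hhge y hy], (hhle y hy).antisymm (hhge y hy)⟩

variable [NormedSpace ℝ E]

lemma exists_isMaxOn_not_isDiscreteSubharmonicAt [Nontrivial E] {K : Set E} (hK : IsCompact K)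
    (hKne : K.Nonempty) (hf : Continuous f) (hh : Continuous h) (hε : 0 < ε) :
    ∃ x ∈ K, IsMaxOn (f + h) K x ∧ ¬(closedBall x ε ⊆ K ∧
      IsDiscreteSubharmonicAt ε f x ∧ IsDiscreteSubharmonicAt ε h x) := by
  by_contra! hcon
  obtain ⟨x₀, hx₀, hmax₀⟩ := hK.exists_isMaxOn hKne (hf.add hh).continuousOn
  set M := K ∩ {x | f x + h x = f x₀ + h x₀}
  have hMc : IsCompact M := hK.inter_right (isClosed_eq (hf.add hh) continuous_const)
  obtain ⟨x₁, hx₁, hmax₁⟩ := hMc.exists_isMaxOn ⟨x₀, hx₀, rfl⟩ hf.continuousOn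
  set M' := M ∩ {x | f x = f x₁}
  have hM'c : IsCompact M' := hMc.inter_right (isClosed_eq hf continuous_const)
  obtain ⟨e, he⟩ := exists_norm_eq E hε.le
  obtain ⟨l, -, hl⟩ := exists_dual_vector ℝ e (he ▸ hε.ne')
  obtain ⟨x, ⟨⟨hxK, hxM⟩, hfx⟩, hxmax⟩ :=
    hM'c.exists_isMaxOn ⟨x₁, hx₁, rfl⟩ l.continuous.continuousOn
  rw [mem_ofPred_eq] at hxM hfx
  obtain ⟨hball, hfsub, hhsub⟩ := hcon x hxK fun y hy ↦ (hmax₀ hy).trans_eq hxM.symm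
  have hxe : x + e ∈ closedBall x ε := by simp [he]
  obtain ⟨hfe, hhe⟩ := hfsub.eq_of_isMax hhsub
    (fun y hy ↦ (hmax₀ (hball hy)).trans_eq hxM.symm)
    (fun y hy hfhy ↦ (hmax₁ ⟨hball hy, hfhy.trans hxM⟩).trans_eq hfx.symm) (x + e) hxe
  have hle : l (x + e) ≤ l x :=
    hxmax ⟨⟨hball hxe, by rw [mem_ofPred_eq, hfe, hhe, hxM]⟩, hfe.trans hfx⟩
  rw [map_add, hl, he] at hle
  simp only [RCLike.ofReal_real_eq_id, id_eq] at hle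
  linarith

lemma exists_mem_frontier_dist_le (hΩ : IsOpen Ω) {r : ℝ} (hr : 0 ≤ r)
    (hx : x ∈ closure Ω) (hball : ¬closedBall x r ⊆ Ω) : ∃ y ∈ frontier Ω, dist y x ≤ r := by
  by_cases hxΩ : x ∈ Ω
  · obtain ⟨y, hy, hyΩ⟩ := not_subset.1 hball
    obtain ⟨z, hz, hzfr⟩ := exists_mem_segment_frontier hΩ hxΩ hyΩ
    exact ⟨z, hzfr, (convex_closedBall x r).segment_subset (mem_closedBall_self hr) hy hz⟩
  · exact ⟨x, hΩ.frontier_eq ▸ ⟨hx, hxΩ⟩, by rwa [dist_self]⟩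

variable [ProperSpace E]

lemma IsAbsolutelyMinimalOn.isDiscreteSubharmonicAt_ballMax (h : IsAbsolutelyMinimalOn u U)
    (hu : Continuous u) (hε : 0 < ε) (hx : closedBall x (2 * ε) ⊆ U) :
    IsDiscreteSubharmonicAt ε (ballMax u ε) x := by
  obtain ⟨z, hz, huz⟩ := exists_eq_ballMax hu (by positivity : 0 ≤ 2 * ε) x
  obtain ⟨w, hw, huw⟩ := exists_eq_ballMax hu hε.le x
  have huxz : u x ≤ u z := huz ▸ le_ballMax hu (mem_closedBall_self (by positivity))
  have hcone : u w ≤ u x + (u z - u x) / (2 * ε) * dist w x := by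
    have hslope : 0 ≤ (u z - u x) / (2 * ε) := div_nonneg (sub_nonneg.2 huxz) (by positivity)
    refine h.le_cone_of_mem_closedBall hu (L := .mk _ hslope) (r := 2 * ε)
      (ball_subset_closedBall.trans hx) (fun y hy ↦ ?_)
      (closedBall_subset_closedBall (by linarith) hw)
    rw [NNReal.coe_mk, div_mul_cancel₀ _ (by positivity), add_sub_cancel, huz]
    exact le_ballMax hu (sphere_subset_closedBall hy)
  have hhalf : (u z - u x) / (2 * ε) * dist w x ≤ (u z - u x) / 2 := by
    rw [div_mul_eq_mul_div, div_le_div_iff₀ (by positivity) two_pos]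
    nlinarith [mem_closedBall.1 hw]
  rw [mem_closedBall] at hz
  refine ⟨midpoint ℝ x z, ?_, fun y hy ↦ ?_⟩
  · rw [mem_closedBall, dist_midpoint_left, Real.norm_two, dist_comm]
    linarith
  · have hmid : u z ≤ ballMax u ε (midpoint ℝ x z) := le_ballMax hu <| by
      rw [mem_closedBall, dist_comm, dist_midpoint_right, Real.norm_two, dist_comm]
      linarith
    have huxy : u x ≤ ballMax u ε y := le_ballMax hu (mem_closedBall_comm.1 hy)
    linarith

lemma IsAbsolutelyMinimalOn.sub_le_of_frontier_of_continuous [Nontrivial E]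
    (hu : IsAbsolutelyMinimalOn u Ω) (hv : IsAbsolutelyMinimalOn v Ω) (huc : Continuous u)
    (hvc : Continuous v) (hΩ : IsOpen Ω) (hΩb : Bornology.IsBounded Ω) {c : ℝ}
    (hc : ∀ x ∈ frontier Ω, u x - v x ≤ c) (hx : x ∈ Ω) : u x - v x ≤ c := by
  by_contra! hlt
  have hΩc : IsCompact (closure Ω) := hΩb.isCompact_closure
  have hfrc : IsCompact (frontier Ω) :=
    hΩc.of_isClosed_subset isClosed_frontier frontier_subset_closure
  have hκ : 0 < (u x - v x - c) / 2 := by linarith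
  obtain ⟨r, hr, hur⟩ := exists_forall_dist_le_lt_add hfrc huc hκ
  obtain ⟨s, hs, hvs⟩ := exists_forall_dist_le_lt_add hfrc hvc.neg hκ
  set ε := min r s / 3 with hεdef
  have hε : 0 < ε := by positivity
  obtain ⟨m, hm, hmax, hnot⟩ := exists_isMaxOn_not_isDiscreteSubharmonicAt hΩc
    ⟨x, subset_closure hx⟩ (continuous_ballMax huc ε) (continuous_ballMax hvc.neg ε) hε
  suffices hsub : closedBall m (2 * ε) ⊆ Ω from hnot
    ⟨(closedBall_subset_closedBall (by linarith)).trans (hsub.trans subset_closure),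
      hu.isDiscreteSubharmonicAt_ballMax huc hε hsub,
      hv.neg.isDiscreteSubharmonicAt_ballMax hvc.neg hε hsub⟩
  by_contra hnsub
  obtain ⟨y, hy, hym⟩ := exists_mem_frontier_dist_le hΩ (by positivity) hm hnsub
  obtain ⟨z, hz, huz⟩ := exists_eq_ballMax huc hε.le m
  obtain ⟨w, hw, hvw⟩ := exists_eq_ballMax hvc.neg hε.le m
  have hnear : ∀ z ∈ closedBall m ε, dist z y ≤ min r s := fun z hz ↦ by
    linarith [dist_triangle_right z y m, mem_closedBall.1 hz]
  have hlarge : u x - v x ≤ ballMax u ε m + ballMax (-v) ε m := by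
    refine le_trans ?_ (hmax (subset_closure hx))
    exact add_le_add (le_ballMax huc (mem_closedBall_self hε.le))
      (le_ballMax hvc.neg (mem_closedBall_self hε.le))
  have huzy := hur y hy z ((hnear z hz).trans (min_le_left r s))
  have hvwy := hvs y hy w ((hnear w hw).trans (min_le_right r s))
  simp only [Pi.neg_apply] at hvw hvwy
  linarith [hc y hy]

theorem IsAbsolutelyMinimalOn.sub_le_of_frontier [Nontrivial E] (hu : IsAbsolutelyMinimalOn u Ω)
    (hv : IsAbsolutelyMinimalOn v Ω) (huc : ContinuousOn u (closure Ω))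
    (hvc : ContinuousOn v (closure Ω)) (hΩ : IsOpen Ω) (hΩb : Bornology.IsBounded Ω) {c : ℝ}
    (hc : ∀ x ∈ frontier Ω, u x - v x ≤ c) (hx : x ∈ Ω) : u x - v x ≤ c := by
  obtain ⟨u', hu'c, huu', hu'⟩ := hu.exists_continuous_eqOn_closure huc
  obtain ⟨v', hv'c, hvv', hv'⟩ := hv.exists_continuous_eqOn_closure hvc
  rw [← huu' (subset_closure hx), ← hvv' (subset_closure hx)]
  refine hu'.sub_le_of_frontier_of_continuous hv' hu'c hv'c hΩ hΩb (fun y hy ↦ ?_) hx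
  rw [huu' (frontier_subset_closure hy), hvv' (frontier_subset_closure hy)]
  exact hc y hy

end ComparisonPrinciple

section FrontierLipschitz

variable {E : Type*} [NormedAddCommGroup E] [NormedSpace ℝ E] {u : E → ℝ} {V : Set E} {x y : E}
  {L : ℝ≥0}

lemma exists_mem_segment_frontier_openSegment_subset (hV : IsOpen V) (hx : x ∈ V) (hy : y ∉ V) :
    ∃ z ∈ segment ℝ x y, z ∈ frontier V ∧ openSegment ℝ x z ⊆ V := by
  have hcompact : IsCompact (segment ℝ x y ∩ Vᶜ) := by
    rw [segment_eq_image_lineMap]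
    exact (isCompact_Icc.image AffineMap.lineMap_continuous).inter_right hV.isClosed_compl
  obtain ⟨z, ⟨hz, hzV⟩, hzmin⟩ := hcompact.exists_isMinOn ⟨y, right_mem_segment ℝ x y, hy⟩
    (f := fun z ↦ dist x z) (by fun_prop)
  have hxz : x ≠ z := fun h ↦ hzV (h ▸ hx)
  have hopen : openSegment ℝ x z ⊆ V := by
    intro w hw
    by_contra hwV
    have hwz : w ≠ z := fun h ↦ hxz (right_mem_openSegment_iff.1 (h ▸ hw))
    have hwxz := openSegment_subset_segment ℝ x z hw
    have hmin : dist x z ≤ dist x w :=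
      hzmin ⟨(convex_segment x y).segment_subset (left_mem_segment ℝ x y) hz hwxz, hwV⟩
    linarith [dist_add_dist_of_mem_segment hwxz, dist_pos.2 hwz]
  refine ⟨z, hz, hV.frontier_eq ▸ ⟨closure_mono hopen ?_, hzV⟩, hopen⟩
  rw [closure_openSegment]
  exact right_mem_segment ℝ x z

lemma exists_mem_segment_frontier_dist_le (hV : IsOpen V) (hu : ContinuousOn u (closure V))
    (hsegm : ∀ s ⊆ V, Convex ℝ s → LipschitzOnWith L u s) (hx : x ∈ V) (hy : y ∉ V) :
    ∃ z ∈ segment ℝ x y, z ∈ frontier V ∧ dist (u x) (u z) ≤ L * dist x z := by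
  obtain ⟨z, hz, hzfr, hopen⟩ := exists_mem_segment_frontier_openSegment_subset hV hx hy
  have hLip : LipschitzOnWith L u (segment ℝ x z) := by
    rw [← closure_openSegment]
    exact (hsegm _ hopen (convex_openSegment x z)).closure (hu.mono (closure_mono hopen))
  exact ⟨z, hz, hzfr, hLip.dist_le_mul x (left_mem_segment ℝ x z) z (right_mem_segment ℝ x z)⟩

theorem lipschitzOnWith_of_frontier_of_convex (hV : IsOpen V) (hu : ContinuousOn u (closure V))
    (hfr : LipschitzOnWith L u (frontier V))
    (hsegm : ∀ s ⊆ V, Convex ℝ s → LipschitzOnWith L u s) : LipschitzOnWith L u V := by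
  refine .of_dist_le_mul fun x hx y hy ↦ ?_
  by_cases hxy : segment ℝ x y ⊆ V
  · exact (hsegm _ hxy (convex_segment x y)).dist_le_mul x (left_mem_segment ℝ x y) y
      (right_mem_segment ℝ x y)
  obtain ⟨w, hw, hwV⟩ := not_subset.1 hxy
  obtain ⟨a, ha, hafr, hxa⟩ := exists_mem_segment_frontier_dist_le hV hu hsegm hx hwV
  obtain ⟨b, hb, hbfr, hyb⟩ := exists_mem_segment_frontier_dist_le hV hu hsegm hy hwV
  calc dist (u x) (u y) ≤ dist (u x) (u a) + dist (u a) (u b) + dist (u b) (u y) :=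
        dist_triangle4 _ _ _ _
    _ ≤ L * dist x a + L * dist a b + L * dist b y := by
        rw [dist_comm (u b), dist_comm b]
        gcongr
        exact hfr.dist_le_mul a hafr b hbfr
    _ ≤ L * ((dist x a + dist a w) + (dist y b + dist b w)) := by
        rw [← mul_add, ← mul_add]
        refine mul_le_mul_of_nonneg_left ?_ L.coe_nonneg
        linarith [dist_triangle_right a b w, dist_comm b y]
    _ = L * dist x y := by
        rw [dist_add_dist_of_mem_segment ha, dist_add_dist_of_mem_segment hb, dist_comm y,
          dist_add_dist_of_mem_segment hw]

end FrontierLipschitz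

section Aronsson

variable {E : Type*} [NormedAddCommGroup E] [InnerProductSpace ℝ E] {p e y : E} {c d : ℝ}

/-- Together with `parRoot (-p)`, the cube roots `(‖y‖ ± ⟪p, y⟫) ^ (1 / 3)` of the parabolic
coordinates of `y` with axis `p`; Aronsson's function is rational in them. -/
def parRoot (p y : E) : ℝ := (‖y‖ + ⟪p, y⟫_ℝ) ^ (1 / 3 : ℝ)

/-- Aronsson's singular infinity-harmonic function, homogeneous of degree `-1/3`, with pole `0`
and axis `p`. -/
def aronsson (p y : E) : ℝ := (parRoot p y ^ 2 - parRoot (-p) y ^ 2) / (4 * ‖y‖)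

/-- The length of the gradient of `aronsson p` at `y`, which is constant along gradient lines. -/
def aronssonSlope (p y : E) : ℝ :=
  1 / (3 * (parRoot p y ^ 2 - parRoot p y * parRoot (-p) y + parRoot (-p) y ^ 2) ^ 2)

section ParabolicCoordinates

lemma norm_add_inner_nonneg (hp : ‖p‖ = 1) (y : E) : 0 ≤ ‖y‖ + ⟪p, y⟫_ℝ := by
  have hle := neg_le_of_abs_le (abs_real_inner_le_norm p y)
  rw [hp, one_mul] at hle
  linarith

lemma parRoot_nonneg (hp : ‖p‖ = 1) (y : E) : 0 ≤ parRoot p y :=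
  Real.rpow_nonneg (norm_add_inner_nonneg hp y) _

lemma parRoot_neg_nonneg (hp : ‖p‖ = 1) (y : E) : 0 ≤ parRoot (-p) y :=
  parRoot_nonneg ((norm_neg p).trans hp) y

lemma parRoot_pow_three (hp : ‖p‖ = 1) (y : E) : parRoot p y ^ 3 = ‖y‖ + ⟪p, y⟫_ℝ := by
  rw [parRoot, ← Real.rpow_natCast, ← Real.rpow_mul (norm_add_inner_nonneg hp y)]
  norm_num

lemma parRoot_neg_pow_three (hp : ‖p‖ = 1) (y : E) : parRoot (-p) y ^ 3 = ‖y‖ - ⟪p, y⟫_ℝ := by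
  rw [parRoot_pow_three ((norm_neg p).trans hp), inner_neg_left, sub_eq_add_neg]

lemma parRoot_eq_of_pow_three {s : ℝ} (hs : 0 ≤ s) (h : s ^ 3 = ‖y‖ + ⟪p, y⟫_ℝ) :
    parRoot p y = s := by
  rw [parRoot, ← h, ← Real.rpow_natCast, ← Real.rpow_mul hs]
  norm_num

lemma parRoot_pow_three_add (hp : ‖p‖ = 1) (y : E) :
    parRoot p y ^ 3 + parRoot (-p) y ^ 3 = 2 * ‖y‖ := by
  rw [parRoot_pow_three hp, parRoot_neg_pow_three hp]
  ring

lemma parRoot_pow_three_sub (hp : ‖p‖ = 1) (y : E) :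
    parRoot p y ^ 3 - parRoot (-p) y ^ 3 = 2 * ⟪p, y⟫_ℝ := by
  rw [parRoot_pow_three hp, parRoot_neg_pow_three hp]
  ring

lemma continuous_parRoot (p : E) : Continuous (parRoot p) := by
  unfold parRoot
  exact Continuous.rpow_const (by fun_prop) fun _ ↦ Or.inr (by norm_num)

lemma parRoot_sq_sub_mul_add_sq_pos (hp : ‖p‖ = 1) (hy : y ≠ 0) :
    0 < parRoot p y ^ 2 - parRoot p y * parRoot (-p) y + parRoot (-p) y ^ 2 := by
  have hsum := parRoot_pow_three_add hp y
  have hy' := norm_pos_iff.2 hy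
  nlinarith [parRoot_nonneg hp y, parRoot_neg_nonneg hp y]

end ParabolicCoordinates

lemma aronsson_neg_left (p y : E) : aronsson (-p) y = -aronsson p y := by
  rw [aronsson, aronsson, neg_neg]
  ring

lemma aronssonSlope_neg_left (p y : E) : aronssonSlope (-p) y = aronssonSlope p y := by
  rw [aronssonSlope, aronssonSlope, neg_neg]
  ring_nf

lemma aronssonSlope_pos (hp : ‖p‖ = 1) (hy : y ≠ 0) : 0 < aronssonSlope p y := by
  have := parRoot_sq_sub_mul_add_sq_pos hp hy
  unfold aronssonSlope
  positivity

lemma continuousOn_aronssonSlope (hp : ‖p‖ = 1) : ContinuousOn (aronssonSlope p) {0}ᶜ := by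
  unfold aronssonSlope
  refine ContinuousOn.div continuousOn_const ?_ fun y hy ↦ ?_
  · have := continuous_parRoot p
    have := continuous_parRoot (-p)
    fun_prop
  · have := parRoot_sq_sub_mul_add_sq_pos hp hy
    positivity

section Gradient

lemma hasFDerivAt_norm (hy : y ≠ 0) :
    HasFDerivAt (fun z : E ↦ ‖z‖) (innerSL ℝ (‖y‖⁻¹ • y)) y := by
  have hsqrt := (hasStrictFDerivAt_norm_sq y).hasFDerivAt.sqrt (by positivity)
  simp only [Real.sqrt_sq (norm_nonneg _)] at hsqrt
  refine hsqrt.congr_fderiv ?_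
  ext v
  simp only [smul_apply, innerSL_apply_apply, smul_eq_mul, nsmul_eq_mul,
    real_inner_smul_left]
  field_simp
  simp

lemma hasFDerivAt_parRoot_sq_of_pos (hp : ‖p‖ = 1) (hy : y ≠ 0) (h : 0 < parRoot p y) :
    HasFDerivAt (fun z ↦ parRoot p z ^ 2)
      (innerSL ℝ ((2 / (3 * parRoot p y)) • (‖y‖⁻¹ • y + p))) y := by
  have hpos : 0 < ‖y‖ + ⟪p, y⟫_ℝ := parRoot_pow_three hp y ▸ pow_pos h 3
  have hsum : HasFDerivAt (fun z ↦ ‖z‖ + ⟪p, z⟫_ℝ) (innerSL ℝ (‖y‖⁻¹ • y + p)) y := by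
    rw [map_add]
    exact (hasFDerivAt_norm hy).add (innerSL ℝ p).hasFDerivAt
  have hroot := (hsum.rpow_const (p := 1 / 3) (Or.inl hpos.ne')).pow 2
  refine hroot.congr_fderiv ?_
  rw [Real.rpow_sub_one hpos.ne', ← parRoot, ← parRoot_pow_three hp, map_smul, smul_smul]
  congr 1
  simp only [nsmul_eq_mul, Nat.cast_ofNat, Nat.add_one_sub_one, pow_one]
  field_simp

lemma norm_sub_inner_smul_sq (hp : ‖p‖ = 1) (y : E) :
    ‖y - ⟪p, y⟫_ℝ • p‖ ^ 2 = ‖y‖ ^ 2 - ⟪p, y⟫_ℝ ^ 2 := by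
  rw [norm_sub_sq_real, real_inner_smul_right, norm_smul, hp, Real.norm_eq_abs, mul_one, sq_abs,
    real_inner_comm]
  ring

lemma parRoot_mul_parRoot_neg_pow_three (hp : ‖p‖ = 1) (y : E) :
    (parRoot p y * parRoot (-p) y) ^ 3 = ‖y - ⟪p, y⟫_ℝ • p‖ ^ 2 := by
  rw [mul_pow, parRoot_pow_three hp, parRoot_neg_pow_three hp, norm_sub_inner_smul_sq hp]
  ring

lemma parRoot_mul_parRoot_neg_sq (hp : ‖p‖ = 1) (y : E) :
    (parRoot p y * parRoot (-p) y) ^ 2 = ‖y - ⟪p, y⟫_ℝ • p‖ ^ (4 / 3 : ℝ) := by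
  have hst : 0 ≤ parRoot p y * parRoot (-p) y :=
    mul_nonneg (parRoot_nonneg hp y) (parRoot_neg_nonneg hp y)
  calc (parRoot p y * parRoot (-p) y) ^ 2
      = ((parRoot p y * parRoot (-p) y) ^ 3) ^ (2 / 3 : ℝ) := by
        rw [← Real.rpow_natCast _ 3, ← Real.rpow_mul hst, ← Real.rpow_natCast _ 2]
        norm_num
    _ = ‖y - ⟪p, y⟫_ℝ • p‖ ^ (4 / 3 : ℝ) := by
        rw [parRoot_mul_parRoot_neg_pow_three hp, ← Real.rpow_natCast _ 2,
          ← Real.rpow_mul (norm_nonneg _)]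
        norm_num

lemma hasFDerivAt_parRoot_sq_of_eq_zero (hp : ‖p‖ = 1) (hy : y ≠ 0) (h : parRoot p y = 0) :
    HasFDerivAt (fun z ↦ parRoot p z ^ 2) (0 : E →L[ℝ] ℝ) y := by
  have hneg : 0 < parRoot (-p) y := by
    have := parRoot_sq_sub_mul_add_sq_pos hp hy
    refine (parRoot_neg_nonneg hp y).lt_of_ne' fun h' ↦ ?_
    simp [h, h'] at this
  have hperp : y - ⟪p, y⟫_ℝ • p = 0 := by
    simpa [h] using (parRoot_mul_parRoot_neg_pow_three hp y).symm
  have hprod : HasFDerivAt (fun z ↦ (parRoot p z * parRoot (-p) z) ^ 2) (0 : E →L[ℝ] ℝ) y := by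
    simp only [parRoot_mul_parRoot_neg_sq hp]
    have hproj : DifferentiableAt ℝ (fun z ↦ z - ⟪p, z⟫_ℝ • p) y :=
      differentiableAt_id.sub ((innerSL ℝ p).differentiableAt.smul_const p)
    simpa [hperp, Function.comp_def] using (hasFDerivAt_norm_rpow (y - ⟪p, y⟫_ℝ • p)
      (by norm_num : (1 : ℝ) < 4 / 3)).comp y hproj.hasFDerivAt
  have hinv := ((hasFDerivAt_parRoot_sq_of_pos ((norm_neg p).trans hp) hy hneg).differentiableAt.inv
    (by positivity)).hasFDerivAt
  have hmul := hprod.mul hinv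
  simp only [h, zero_mul, ne_eq, OfNat.ofNat_ne_zero, not_false_eq_true, zero_pow, zero_smul,
    smul_zero, add_zero] at hmul
  refine hmul.congr_of_eventuallyEq ?_
  filter_upwards [(continuous_parRoot (-p)).continuousAt.eventually_ne hneg.ne'] with z hz
  rw [Pi.mul_apply, Pi.inv_apply, mul_pow, mul_inv_cancel_right₀ (pow_ne_zero 2 hz)]

/-- Where `parRoot p y = 0` the right-hand side is `0` by the convention `2 / 0 = 0`, which is the
correct derivative there. -/
lemma hasFDerivAt_parRoot_sq (hp : ‖p‖ = 1) (hy : y ≠ 0) :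
    HasFDerivAt (fun z ↦ parRoot p z ^ 2)
      (innerSL ℝ ((2 / (3 * parRoot p y)) • (‖y‖⁻¹ • y + p))) y := by
  rcases (parRoot_nonneg hp y).eq_or_lt with h | h
  · simpa [← h] using hasFDerivAt_parRoot_sq_of_eq_zero hp hy h.symm
  · exact hasFDerivAt_parRoot_sq_of_pos hp hy h

lemma hasFDerivAt_aronsson (hp : ‖p‖ = 1) (hy : y ≠ 0) :
    HasFDerivAt (aronsson p) (innerSL ℝ
      ((1 / (6 * ‖y‖ * parRoot p y) - (parRoot p y ^ 2 - parRoot (-p) y ^ 2) / (8 * ‖y‖ ^ 2)) •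
          (‖y‖⁻¹ • y + p) -
        (1 / (6 * ‖y‖ * parRoot (-p) y) - (parRoot (-p) y ^ 2 - parRoot p y ^ 2) / (8 * ‖y‖ ^ 2)) •
          (‖y‖⁻¹ • y - p))) y := by
  have hp' : ‖-p‖ = 1 := (norm_neg p).trans hp
  have hinv : HasFDerivAt (fun z : E ↦ (4 * ‖z‖)⁻¹)
      (-((4 * ‖y‖) ^ 2)⁻¹ • (4 : ℝ) • innerSL ℝ (‖y‖⁻¹ • y)) y :=
    (hasDerivAt_inv (by positivity)).comp_hasFDerivAt y ((hasFDerivAt_norm hy).const_mul 4)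
  refine (((hasFDerivAt_parRoot_sq hp hy).sub
    (hasFDerivAt_parRoot_sq hp' hy)).mul hinv).congr_fderiv ?_
  simp only [← map_smul, ← map_sub, ← map_add]
  generalize ‖y‖⁻¹ • y = x
  congr 1
  simp only [Pi.sub_apply]
  module

lemma differentiableAt_aronsson (hp : ‖p‖ = 1) (hy : y ≠ 0) : DifferentiableAt ℝ (aronsson p) y :=
  (hasFDerivAt_aronsson hp hy).differentiableAt

lemma gradient_coeff_sq_mul {s t R : ℝ} (hs : 0 ≤ s) (ht : 0 ≤ t) (hR : 0 < R)
    (h : s ^ 3 + t ^ 3 = 2 * R) :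
    (1 / (6 * R * s) - (s ^ 2 - t ^ 2) / (8 * R ^ 2)) ^ 2 * s ^ 3 =
      s * (2 * t - s) ^ 2 / (36 * (s ^ 2 - s * t + t ^ 2) ^ 4) := by
  rcases hs.eq_or_lt with rfl | hs
  · simp
  have hD : 0 < s ^ 2 - s * t + t ^ 2 := by nlinarith
  have hst : 0 < s + t := by positivity
  obtain rfl : R = (s + t) * (s ^ 2 - s * t + t ^ 2) / 2 := by linarith
  have hcoeff : 1 / (6 * ((s + t) * (s ^ 2 - s * t + t ^ 2) / 2) * s) -
      (s ^ 2 - t ^ 2) / (8 * ((s + t) * (s ^ 2 - s * t + t ^ 2) / 2) ^ 2) =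
      (2 * t - s) / (6 * s * (s ^ 2 - s * t + t ^ 2) ^ 2) := by
    field_simp [hst.ne', hD.ne']
    ring
  rw [hcoeff]
  field_simp
  norm_num

lemma norm_smul_add_sub_smul_sub_sq {x : E} (hx : ‖x‖ = 1) (hp : ‖p‖ = 1) (a b : ℝ) :
    ‖a • (x + p) - b • (x - p)‖ ^ 2 =
      2 * (a ^ 2 * (1 + ⟪p, x⟫_ℝ) + b ^ 2 * (1 - ⟪p, x⟫_ℝ)) := by
  have hperp : ⟪x + p, x - p⟫_ℝ = 0 := (real_inner_add_sub_eq_zero_iff x p).2 (hx.trans hp.symm)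
  rw [norm_sub_sq_real, real_inner_smul_left, real_inner_smul_right, hperp, norm_smul, norm_smul,
    mul_pow, mul_pow, norm_add_sq_real, norm_sub_sq_real, hx, hp, Real.norm_eq_abs,
    Real.norm_eq_abs, sq_abs, sq_abs, real_inner_comm]
  ring

lemma norm_fderiv_aronsson (hp : ‖p‖ = 1) (hy : y ≠ 0) :
    ‖fderiv ℝ (aronsson p) y‖ = aronssonSlope p y := by
  have hR : 0 < ‖y‖ := norm_pos_iff.2 hy
  have hs := parRoot_nonneg hp y
  have ht := parRoot_neg_nonneg hp y
  have hsum := parRoot_pow_three_add hp y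
  have hs3 : 1 + ⟪p, ‖y‖⁻¹ • y⟫_ℝ = parRoot p y ^ 3 / ‖y‖ := by
    rw [parRoot_pow_three hp, real_inner_smul_right]
    field_simp
  have ht3 : 1 - ⟪p, ‖y‖⁻¹ • y⟫_ℝ = parRoot (-p) y ^ 3 / ‖y‖ := by
    rw [parRoot_neg_pow_three hp, real_inner_smul_right]
    field_simp
  have hx : ‖‖y‖⁻¹ • y‖ = 1 := by simpa using norm_smul_inv_norm (𝕜 := ℝ) hy
  have hD := parRoot_sq_sub_mul_add_sq_pos hp hy
  rw [(hasFDerivAt_aronsson hp hy).fderiv, innerSL_apply_norm,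
    ← sq_eq_sq₀ (norm_nonneg _) (aronssonSlope_pos hp hy).le,
    norm_smul_add_sub_smul_sub_sq hx hp, hs3, ht3, mul_div_assoc', mul_div_assoc',
    gradient_coeff_sq_mul hs ht hR hsum,
    gradient_coeff_sq_mul ht hs hR (by rw [add_comm, hsum]), aronssonSlope]
  generalize parRoot p y = s at *
  generalize parRoot (-p) y = t at *
  have hnum : s * (2 * t - s) ^ 2 + t * (2 * s - t) ^ 2 = 2 * ‖y‖ := by linear_combination hsum
  rw [show t ^ 2 - t * s + s ^ 2 = s ^ 2 - s * t + t ^ 2 by ring, ← add_div, ← add_div, hnum]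
  field_simp
  norm_num

end Gradient

section Streamlines

/-- A gradient line of `aronsson p` in the half-plane spanned by `p` and `e`, parametrized by
`c ∈ [-1, 1]`; it joins the axis point `(-d ^ 3 / 2) • p` to `(d ^ 3 / 2) • p`. -/
def streamline (p e : E) (d c : ℝ) : E :=
  (d ^ 3 / 2 * (3 * c - 2 * c ^ 3)) • p + ((d * √(1 - c ^ 2)) ^ 3) • e

lemma streamline_neg_left (p e : E) (d c : ℝ) : streamline (-p) e d c = streamline p e d (-c) := by
  rw [streamline, streamline, neg_sq, smul_neg, ← neg_smul]
  ring_nf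

lemma streamline_one (p e : E) (d : ℝ) : streamline p e d 1 = (d ^ 3 / 2) • p := by
  rw [streamline]
  norm_num

lemma continuous_streamline (p e : E) (d : ℝ) : Continuous (streamline p e d) := by
  unfold streamline
  fun_prop

lemma norm_smul_add_smul_sq (hp : ‖p‖ = 1) (he : ‖e‖ = 1) (hpe : ⟪p, e⟫_ℝ = 0) (a b : ℝ) :
    ‖a • p + b • e‖ ^ 2 = a ^ 2 + b ^ 2 := by
  rw [norm_add_sq_real, real_inner_smul_left, real_inner_smul_right, hpe, norm_smul, norm_smul, hp,
    he, Real.norm_eq_abs, Real.norm_eq_abs, mul_one, mul_one, sq_abs, sq_abs]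
  ring

lemma norm_streamline (hp : ‖p‖ = 1) (he : ‖e‖ = 1) (hpe : ⟪p, e⟫_ℝ = 0) (hd : 0 ≤ d)
    (hc : c ∈ Icc (-1) 1) : ‖streamline p e d c‖ = d ^ 3 / 2 * √(4 - 3 * c ^ 2) := by
  have hc' : 0 ≤ 1 - c ^ 2 := by nlinarith [hc.1, hc.2]
  rw [← sq_eq_sq₀ (norm_nonneg _) (by positivity), streamline, norm_smul_add_smul_sq hp he hpe,
    mul_pow _ √(4 - 3 * c ^ 2), Real.sq_sqrt (by linarith), ← pow_mul, mul_comm 3 2, pow_mul,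
    mul_pow d, Real.sq_sqrt hc']
  ring

lemma inner_streamline (hp : ‖p‖ = 1) (hpe : ⟪p, e⟫_ℝ = 0) (d c : ℝ) :
    ⟪p, streamline p e d c⟫_ℝ = d ^ 3 / 2 * (3 * c - 2 * c ^ 3) := by
  rw [streamline, inner_add_right, real_inner_smul_right, real_inner_smul_right, hpe,
    real_inner_self_eq_norm_sq, hp]
  ring

lemma parRoot_streamline (hp : ‖p‖ = 1) (he : ‖e‖ = 1) (hpe : ⟪p, e⟫_ℝ = 0) (hd : 0 ≤ d)
    (hc : c ∈ Icc (-1) 1) :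
    parRoot p (streamline p e d c) = d * (√(4 - 3 * c ^ 2) + c) / 2 := by
  have hc' : c ^ 2 ≤ 1 := by nlinarith [hc.1, hc.2]
  have hw : √(4 - 3 * c ^ 2) ^ 2 = 4 - 3 * c ^ 2 := Real.sq_sqrt (by linarith)
  have hwc : 0 ≤ √(4 - 3 * c ^ 2) + c := by
    linarith [hc.1, Real.one_le_sqrt.2 (by linarith : 1 ≤ 4 - 3 * c ^ 2)]
  refine parRoot_eq_of_pow_three (by positivity) ?_
  rw [norm_streamline hp he hpe hd hc, inner_streamline hp hpe]
  linear_combination d ^ 3 / 8 * (√(4 - 3 * c ^ 2) + 3 * c) * hw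

lemma parRoot_neg_streamline (hp : ‖p‖ = 1) (he : ‖e‖ = 1) (hpe : ⟪p, e⟫_ℝ = 0) (hd : 0 ≤ d)
    (hc : c ∈ Icc (-1) 1) :
    parRoot (-p) (streamline p e d c) = d * (√(4 - 3 * c ^ 2) - c) / 2 := by
  have hc' : -c ∈ Icc (-1) 1 := ⟨neg_le_neg hc.2, neg_le.1 hc.1⟩
  have h := parRoot_streamline ((norm_neg p).trans hp) he
    (by rw [inner_neg_left, hpe, neg_zero] : ⟪-p, e⟫_ℝ = 0) hd hc'
  rwa [streamline_neg_left, neg_neg, neg_sq, ← sub_eq_add_neg] at h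

lemma aronsson_streamline (hp : ‖p‖ = 1) (he : ‖e‖ = 1) (hpe : ⟪p, e⟫_ℝ = 0) (hd : 0 < d)
    (hc : c ∈ Icc (-1) 1) : aronsson p (streamline p e d c) = c / (2 * d) := by
  have hw : 0 < √(4 - 3 * c ^ 2) := Real.sqrt_pos.2 (by nlinarith [hc.1, hc.2])
  rw [aronsson, parRoot_streamline hp he hpe hd.le hc, parRoot_neg_streamline hp he hpe hd.le hc,
    norm_streamline hp he hpe hd.le hc]
  field_simp
  ring

lemma aronssonSlope_streamline (hp : ‖p‖ = 1) (he : ‖e‖ = 1) (hpe : ⟪p, e⟫_ℝ = 0) (hd : 0 ≤ d)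
    (hc : c ∈ Icc (-1) 1) : aronssonSlope p (streamline p e d c) = 1 / (3 * d ^ 4) := by
  have hw : √(4 - 3 * c ^ 2) ^ 2 = 4 - 3 * c ^ 2 := Real.sq_sqrt (by nlinarith [hc.1, hc.2])
  rw [aronssonSlope, parRoot_streamline hp he hpe hd hc, parRoot_neg_streamline hp he hpe hd hc]
  congr 2
  rw [pow_mul d 2 2]
  congr 1
  linear_combination d ^ 2 / 4 * hw

lemma exists_norm_eq_one_inner_eq_zero (h : 1 < Module.rank ℝ E) (p : E) :
    ∃ e : E, ‖e‖ = 1 ∧ ⟪p, e⟫_ℝ = 0 := by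
  have hne : (ℝ ∙ p)ᗮ ≠ ⊥ := fun hbot ↦ by
    have hrank := rank_span_le (R := ℝ) ({p} : Set E)
    rw [(Submodule.orthogonal_eq_bot_iff).1 hbot, rank_top, Cardinal.mk_singleton] at hrank
    exact hrank.not_gt h
  obtain ⟨v, hv, hv0⟩ := Submodule.exists_mem_ne_zero_of_ne_bot hne
  refine ⟨‖v‖⁻¹ • v, by simpa using norm_smul_inv_norm (𝕜 := ℝ) hv0, ?_⟩
  rw [real_inner_smul_right, Submodule.mem_orthogonal_singleton_iff_inner_right.1 hv, mul_zero]

lemma exists_eq_inner_smul_add_norm_smul (h : 1 < Module.rank ℝ E) (hp : ‖p‖ = 1) (y : E) :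
    ∃ e : E, ‖e‖ = 1 ∧ ⟪p, e⟫_ℝ = 0 ∧ y = ⟪p, y⟫_ℝ • p + ‖y - ⟪p, y⟫_ℝ • p‖ • e := by
  rcases eq_or_ne (y - ⟪p, y⟫_ℝ • p) 0 with hq | hq
  · obtain ⟨e, he, hpe⟩ := exists_norm_eq_one_inner_eq_zero h p
    exact ⟨e, he, hpe, by
      rw [hq, norm_zero, zero_smul, add_zero]
      exact sub_eq_zero.1 hq⟩
  · refine ⟨‖y - ⟪p, y⟫_ℝ • p‖⁻¹ • (y - ⟪p, y⟫_ℝ • p),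
      by simpa using norm_smul_inv_norm (𝕜 := ℝ) hq, ?_, ?_⟩
    · rw [real_inner_smul_right, inner_sub_right, real_inner_smul_right,
        real_inner_self_eq_norm_sq, hp]
      ring
    · rw [smul_inv_smul₀ (norm_ne_zero_iff.2 hq), add_sub_cancel]

lemma exists_streamline_eq (h : 1 < Module.rank ℝ E) (hp : ‖p‖ = 1) (hy : y ≠ 0) :
    ∃ e : E, ‖e‖ = 1 ∧ ⟪p, e⟫_ℝ = 0 ∧ ∃ d, 0 < d ∧ ∃ c ∈ Icc (-1 : ℝ) 1,
      streamline p e d c = y := by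
  obtain ⟨e, he, hpe, hye⟩ := exists_eq_inner_smul_add_norm_smul h hp y
  have hs := parRoot_nonneg hp y
  have ht := parRoot_neg_nonneg hp y
  have hD := parRoot_sq_sub_mul_add_sq_pos hp hy
  have hX := parRoot_pow_three_sub hp y
  have hQ := parRoot_mul_parRoot_neg_pow_three hp y
  set s := parRoot p y
  set t := parRoot (-p) y
  set d := √(s ^ 2 - s * t + t ^ 2)
  have hd : 0 < d := Real.sqrt_pos.2 hD
  have hd2 : d ^ 2 = s ^ 2 - s * t + t ^ 2 := Real.sq_sqrt hD.le
  have hst : 0 ≤ s * t := mul_nonneg hs ht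
  have hσ : d * √(1 - ((s - t) / d) ^ 2) = √(s * t) := by
    rw [show s * t = d ^ 2 * (1 - ((s - t) / d) ^ 2) by field_simp; linarith,
      Real.sqrt_mul (sq_nonneg d), Real.sqrt_sq hd.le]
  refine ⟨e, he, hpe, d, hd, (s - t) / d, abs_le.1 ?_, ?_⟩
  · rw [abs_div, abs_of_pos hd, div_le_one hd]
    exact Real.abs_le_sqrt (by linarith)
  · have hxcoord : d ^ 3 / 2 * (3 * ((s - t) / d) - 2 * ((s - t) / d) ^ 3) = ⟪p, y⟫_ℝ := by
      field_simp
      linear_combination 3 * (s - t) * hd2 + hX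
    have hycoord : √(s * t) ^ 3 = ‖y - ⟪p, y⟫_ℝ • p‖ := by
      rw [← sq_eq_sq₀ (by positivity) (norm_nonneg _), ← hQ, ← pow_mul, mul_comm 3 2, pow_mul,
        Real.sq_sqrt hst]
    rw [streamline, hσ, hxcoord, hycoord, ← hye]

lemma streamline_chord_sq_le {a b σ τ : ℝ} (ha : a ^ 2 + σ ^ 2 = 1) (hb : b ^ 2 + τ ^ 2 = 1)
    (hσ : 0 ≤ σ) (hτ : 0 ≤ τ) :
    ((3 * a - 2 * a ^ 3) / 2 - (3 * b - 2 * b ^ 3) / 2) ^ 2 + (σ ^ 3 - τ ^ 3) ^ 2 ≤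
      (3 / 2 * (a - b)) ^ 2 := by
  have hab : a * b ≤ 1 := by nlinarith [sq_nonneg (a - b), sq_nonneg σ, sq_nonneg τ]
  have hdefect : 0 ≤ (1 - a * b - σ * τ) ^ 2 * (1 + 2 * (σ * τ) - a * b) :=
    mul_nonneg (sq_nonneg _) (by nlinarith [mul_nonneg hσ hτ])
  have hidentity : (3 / 2 * (a - b)) ^ 2 -
      (((3 * a - 2 * a ^ 3) / 2 - (3 * b - 2 * b ^ 3) / 2) ^ 2 + (σ ^ 3 - τ ^ 3) ^ 2) =
      (1 - a * b - σ * τ) ^ 2 * (1 + 2 * (σ * τ) - a * b) := by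
    linear_combination
      (3 * (1 - a * b) * τ ^ 2 -
        (σ ^ 4 + σ ^ 2 * (1 - a ^ 2) + (1 - a ^ 2) ^ 2)) * ha +
      (3 * (1 - a * b) * (1 - a ^ 2) -
        (τ ^ 4 + τ ^ 2 * (1 - b ^ 2) + (1 - b ^ 2) ^ 2)) * hb
  linarith

lemma dist_streamline_le (hp : ‖p‖ = 1) (he : ‖e‖ = 1) (hpe : ⟪p, e⟫_ℝ = 0) (hd : 0 ≤ d) {a b : ℝ}
    (ha : a ∈ Icc (-1) 1) (hb : b ∈ Icc (-1) 1) :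
    dist (streamline p e d a) (streamline p e d b) ≤ 3 / 2 * d ^ 3 * |a - b| := by
  have hsq {x : ℝ} (hx : x ∈ Icc (-1) 1) : x ^ 2 + √(1 - x ^ 2) ^ 2 = 1 := by
    rw [Real.sq_sqrt (by nlinarith [hx.1, hx.2])]
    ring
  have hchord := streamline_chord_sq_le (hsq ha) (hsq hb) (Real.sqrt_nonneg _) (Real.sqrt_nonneg _)
  have hsub : streamline p e d a - streamline p e d b =
      (d ^ 3 * ((3 * a - 2 * a ^ 3) / 2 - (3 * b - 2 * b ^ 3) / 2)) • p +
        (d ^ 3 * (√(1 - a ^ 2) ^ 3 - √(1 - b ^ 2) ^ 3)) • e := by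
    rw [streamline, streamline]
    module
  rw [dist_eq_norm, hsub, ← sq_le_sq₀ (norm_nonneg _) (by positivity),
    norm_smul_add_smul_sq hp he hpe, mul_pow, mul_pow, ← mul_add]
  calc _ ≤ (d ^ 3) ^ 2 * (3 / 2 * (a - b)) ^ 2 := by gcongr
    _ = (3 / 2 * d ^ 3 * |a - b|) ^ 2 := by
      rw [mul_pow, mul_pow _ |a - b|, sq_abs]
      ring

end Streamlines

section AbsoluteMinimality

lemma aronssonSlope_mul_dist_streamline_le (hp : ‖p‖ = 1) (he : ‖e‖ = 1) (hpe : ⟪p, e⟫_ℝ = 0)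
    (hd : 0 < d) {a b : ℝ} (ha : a ∈ Icc (-1) 1) (hb : b ∈ Icc (-1) 1) (hab : a ≤ b) :
    aronssonSlope p (streamline p e d a) * dist (streamline p e d b) (streamline p e d a) ≤
      aronsson p (streamline p e d b) - aronsson p (streamline p e d a) := by
  rw [aronssonSlope_streamline hp he hpe hd.le ha, aronsson_streamline hp he hpe hd ha,
    aronsson_streamline hp he hpe hd hb]
  calc 1 / (3 * d ^ 4) * dist (streamline p e d b) (streamline p e d a)
      ≤ 1 / (3 * d ^ 4) * (3 / 2 * d ^ 3 * |b - a|) := by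
        gcongr
        exact dist_streamline_le hp he hpe hd.le hb ha
    _ = b / (2 * d) - a / (2 * d) := by
        rw [abs_of_nonneg (sub_nonneg.2 hab)]
        field_simp

lemma aronssonSlope_mul_dist_axis_le (hp : ‖p‖ = 1) (he : ‖e‖ = 1) (hpe : ⟪p, e⟫_ℝ = 0)
    {ε : ℝ} (hε : 0 < ε) (hεd : ε ≤ d) :
    aronssonSlope p (streamline p e d 1) * dist (streamline p e ε 1) (streamline p e d 1) ≤
      aronsson p (streamline p e ε 1) - aronsson p (streamline p e d 1) := by
  have hd : 0 < d := hε.trans_le hεd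
  have h1 : (1 : ℝ) ∈ Icc (-1) 1 := by norm_num
  have hcube : ε ^ 3 ≤ d ^ 3 := by gcongr
  have hdist : dist (streamline p e ε 1) (streamline p e d 1) = (d ^ 3 - ε ^ 3) / 2 := by
    rw [streamline_one, streamline_one, dist_eq_norm, ← sub_smul, norm_smul, hp, mul_one,
      Real.norm_eq_abs, abs_sub_comm, abs_of_nonneg (by linarith)]
    ring
  rw [hdist, aronssonSlope_streamline hp he hpe hd.le h1, aronsson_streamline hp he hpe hε h1,
    aronsson_streamline hp he hpe hd h1, div_sub_div _ _ (by positivity) (by positivity),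
    div_mul_div_comm, div_le_div_iff₀ (by positivity) (by positivity)]
  have hquad : ε * (d ^ 2 + d * ε + ε ^ 2) ≤ 3 * d ^ 3 := by
    nlinarith [mul_le_mul hεd hεd hε.le hd.le, pow_le_pow_left₀ hε.le hεd 3,
      mul_le_mul_of_nonneg_right hεd (sq_nonneg d)]
  have := mul_le_mul_of_nonneg_left hquad (mul_nonneg hd.le (sub_nonneg.2 hεd))
  nlinarith

/-- Follow the streamline of `y` up to the axis, and then the axis down to the pole. -/
lemma exists_isPreconnected_aronsson_ascent (h : 1 < Module.rank ℝ E) (hp : ‖p‖ = 1) (hy : y ≠ 0) :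
    ∃ S : Set E, IsPreconnected S ∧ y ∈ S ∧ 0 ∈ S ∧
      ∀ z ∈ S, z ≠ 0 → aronssonSlope p y * dist z y ≤ aronsson p z - aronsson p y := by
  obtain ⟨e, he, hpe, d, hd, c, hc, rfl⟩ := exists_streamline_eq h hp hy
  have h1 : (1 : ℝ) ∈ Icc (-1) 1 := by norm_num
  have haxis : Continuous fun ε ↦ streamline p e ε 1 := by
    simp only [streamline_one]
    fun_prop
  refine ⟨streamline p e d '' Icc c 1 ∪ (fun ε ↦ streamline p e ε 1) '' Icc 0 d, ?_,
    Or.inl ⟨c, left_mem_Icc.2 hc.2, rfl⟩, Or.inr ⟨0, left_mem_Icc.2 hd.le, by simp [streamline]⟩,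
    ?_⟩
  · exact (isPreconnected_Icc.image _ (continuous_streamline p e d).continuousOn).union
      (streamline p e d 1) ⟨1, right_mem_Icc.2 hc.2, rfl⟩ ⟨d, right_mem_Icc.2 hd.le, rfl⟩
      (isPreconnected_Icc.image _ haxis.continuousOn)
  rintro _ (⟨b, hb, rfl⟩ | ⟨ε, hε, rfl⟩) hz
  · exact aronssonSlope_mul_dist_streamline_le hp he hpe hd hc ⟨hc.1.trans hb.1, hb.2⟩ hb.1
  · have hε0 : 0 < ε := hε.1.lt_of_ne' fun h0 ↦ hz (by simp [h0, streamline])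
    have hslope : aronssonSlope p (streamline p e d 1) = aronssonSlope p (streamline p e d c) := by
      rw [aronssonSlope_streamline hp he hpe hd.le h1, aronssonSlope_streamline hp he hpe hd.le hc]
    have hline := aronssonSlope_mul_dist_streamline_le hp he hpe hd hc h1 hc.2
    have haxis := aronssonSlope_mul_dist_axis_le hp he hpe hε0 hε.2
    rw [hslope] at haxis
    have htri := mul_le_mul_of_nonneg_left
      (dist_triangle (streamline p e ε 1) (streamline p e d 1) (streamline p e d c))
      (aronssonSlope_pos hp hy).le
    linarith

lemma exists_mem_frontier_aronsson_ascent (h : 1 < Module.rank ℝ E) (hp : ‖p‖ = 1) {V : Set E}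
    (hV : IsOpen V) (h0 : (0 : E) ∉ closure V) (hy : y ∈ V) :
    ∃ z ∈ frontier V, aronssonSlope p y * dist z y ≤ aronsson p z - aronsson p y := by
  have h0V : (0 : E) ∉ V := fun h ↦ h0 (subset_closure h)
  obtain ⟨S, hS, hyS, h0S, hasc⟩ :=
    exists_isPreconnected_aronsson_ascent h hp (ne_of_mem_of_not_mem hy h0V)
  obtain ⟨z, hzS, hzV⟩ := exists_mem_frontier_of_isPreconnected hS hV ⟨y, hyS, hy⟩ ⟨0, h0S, h0V⟩
  exact ⟨z, hzV, hasc z hzS (ne_of_mem_of_not_mem (frontier_subset_closure hzV) h0)⟩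

lemma aronssonSlope_le_of_lipschitzOnWith_frontier (h : 1 < Module.rank ℝ E) (hp : ‖p‖ = 1)
    {V : Set E} (hV : IsOpen V) (h0 : (0 : E) ∉ closure V) {L : ℝ≥0}
    (hL : LipschitzOnWith L (aronsson p) (frontier V)) (hy : y ∈ V) : aronssonSlope p y ≤ L := by
  obtain ⟨z, hz, hup⟩ := exists_mem_frontier_aronsson_ascent h hp hV h0 hy
  obtain ⟨w, hw, hdown⟩ :=
    exists_mem_frontier_aronsson_ascent h ((norm_neg p).trans hp) hV h0 hy
  rw [aronssonSlope_neg_left, aronsson_neg_left, aronsson_neg_left] at hdown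
  have hzy : 0 < dist z y :=
    dist_pos.2 (ne_of_mem_of_not_mem hy (hV.frontier_eq ▸ hz).2).symm
  have hlip := (le_abs_self _).trans (hL.dist_le_mul z hz w hw)
  have htri := mul_le_mul_of_nonneg_left (dist_triangle_right z w y) L.coe_nonneg
  refine le_of_mul_le_mul_right ?_ (add_pos_of_pos_of_nonneg hzy (dist_nonneg (x := w) (y := y)))
  linarith

lemma continuousOn_aronsson (hp : ‖p‖ = 1) {S : Set E} (h0 : (0 : E) ∉ S) :
    ContinuousOn (aronsson p) S := fun _ hx ↦
  (differentiableAt_aronsson hp (ne_of_mem_of_not_mem hx h0)).continuousAt.continuousWithinAt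

lemma lipschitzOnWith_aronsson_of_convex (hp : ‖p‖ = 1) {S : Set E} (hS : Convex ℝ S)
    (h0 : (0 : E) ∉ S) {L : ℝ≥0} (hL : ∀ x ∈ S, aronssonSlope p x ≤ L) :
    LipschitzOnWith L (aronsson p) S := by
  refine hS.lipschitzOnWith_of_nnnorm_fderiv_le
    (fun x hx ↦ differentiableAt_aronsson hp (ne_of_mem_of_not_mem hx h0)) fun x hx ↦ ?_
  rw [← NNReal.coe_le_coe, coe_nnnorm, norm_fderiv_aronsson hp (ne_of_mem_of_not_mem hx h0)]
  exact hL x hx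

theorem isAbsolutelyMinimalOn_aronsson (h : 1 < Module.rank ℝ E) (hp : ‖p‖ = 1) {U : Set E}
    (h0 : (0 : E) ∉ closure U) : IsAbsolutelyMinimalOn (aronsson p) U := by
  refine isAbsolutelyMinimalOn_of_lipschitzOnWith (continuousOn_aronsson hp h0)
    fun V hV hVU L hL ↦ ?_
  have h0V : (0 : E) ∉ closure V := fun hmem ↦ h0 (closure_mono hVU hmem)
  refine lipschitzOnWith_of_frontier_of_convex hV (continuousOn_aronsson hp h0V) hL
    fun s hsV hs ↦ ?_
  have h0s : (0 : E) ∉ s := fun hmem ↦ h0V (subset_closure (hsV hmem))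
  exact lipschitzOnWith_aronsson_of_convex hp hs h0s fun x hx ↦
    aronssonSlope_le_of_lipschitzOnWith_frontier h hp hV h0V hL (hsV hx)

lemma exists_lipschitzOnWith_aronsson (hp : ‖p‖ = 1) {K : Set E} (hK : IsCompact K)
    (hconv : Convex ℝ K) (h0 : (0 : E) ∉ K) :
    ∃ L : ℝ≥0, LipschitzOnWith L (aronsson p) K := by
  obtain ⟨L, hL⟩ := hK.bddAbove_image
    ((continuousOn_aronssonSlope hp).mono (subset_compl_singleton_iff.2 h0))
  exact ⟨L.toNNReal, lipschitzOnWith_aronsson_of_convex hp hconv h0 fun x hx ↦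
    (hL (mem_image_of_mem _ hx)).trans (Real.le_coe_toNNReal L)⟩

end AbsoluteMinimality

section Estimates

lemma aronsson_mul_eq_inner (hp : ‖p‖ = 1) (y : E) :
    aronsson p y * (parRoot p y ^ 4 + parRoot p y ^ 2 * parRoot (-p) y ^ 2 + parRoot (-p) y ^ 4) =
      ⟪p, y⟫_ℝ := by
  rcases eq_or_ne y 0 with rfl | hy
  · simp [aronsson]
  rw [aronsson, div_mul_eq_mul_div, div_eq_iff (by positivity)]
  linear_combination (parRoot p y ^ 3 - parRoot (-p) y ^ 3) * parRoot_pow_three_add hp y +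
    2 * ‖y‖ * parRoot_pow_three_sub hp y

lemma aronsson_nonneg (hp : ‖p‖ = 1) (hy : 0 ≤ ⟪p, y⟫_ℝ) : 0 ≤ aronsson p y := by
  have hle : parRoot (-p) y ≤ parRoot p y := by
    refine le_of_pow_le_pow_left₀ three_ne_zero (parRoot_nonneg hp y) ?_
    rw [parRoot_pow_three hp, parRoot_neg_pow_three hp]
    linarith
  have hsq := pow_le_pow_left₀ (parRoot_neg_nonneg hp y) hle 2
  exact div_nonneg (sub_nonneg.2 hsq) (by positivity)

lemma cube_add_cube_pow_four_le (s t : ℝ) :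
    (s ^ 3 + t ^ 3) ^ 4 ≤ (s ^ 4 + s ^ 2 * t ^ 2 + t ^ 4) ^ 3 := by
  have h₁ : 0 ≤ s ^ 8 * t ^ 2 * (3 * s ^ 2 - 4 * s * t + 6 * t ^ 2) :=
    mul_nonneg (by positivity) (by nlinarith [sq_nonneg (2 * s - 2 * t), sq_nonneg (s - t)])
  have h₂ : 0 ≤ s ^ 2 * t ^ 8 * (6 * s ^ 2 - 4 * s * t + 3 * t ^ 2) :=
    mul_nonneg (by positivity) (by nlinarith [sq_nonneg (2 * s - 2 * t), sq_nonneg (s - t)])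
  have h₃ : 0 ≤ s ^ 6 * t ^ 6 := by positivity
  linarith

lemma quartic_sum_pow_three_le {s t : ℝ} (hs : 0 ≤ s) (ht : 0 ≤ t) :
    (s ^ 4 + s ^ 2 * t ^ 2 + t ^ 4) ^ 3 ≤ 27 * (s ^ 3 + t ^ 3) ^ 4 := by
  wlog hst : t ≤ s generalizing s t
  · convert this ht hs (le_of_not_ge hst) using 1 <;> ring
  calc (s ^ 4 + s ^ 2 * t ^ 2 + t ^ 4) ^ 3 ≤ (s ^ 4 + s ^ 2 * s ^ 2 + s ^ 4) ^ 3 := by gcongr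
    _ = 27 * (s ^ 3) ^ 4 := by ring
    _ ≤ 27 * (s ^ 3 + t ^ 3) ^ 4 := by
      gcongr
      exact le_add_of_nonneg_right (by positivity)

lemma norm_pow_four_mul_aronsson_pow_three_le (hp : ‖p‖ = 1) (hy : 0 ≤ ⟪p, y⟫_ℝ) :
    16 * ‖y‖ ^ 4 * aronsson p y ^ 3 ≤ ⟪p, y⟫_ℝ ^ 3 := by
  have hG := pow_nonneg (aronsson_nonneg hp hy) 3
  have hle := mul_le_mul_of_nonneg_left
    (cube_add_cube_pow_four_le (parRoot p y) (parRoot (-p) y)) hG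
  rw [parRoot_pow_three_add hp, ← mul_pow, aronsson_mul_eq_inner hp] at hle
  linarith

lemma inner_pow_three_le (hp : ‖p‖ = 1) (hy : 0 ≤ ⟪p, y⟫_ℝ) :
    ⟪p, y⟫_ℝ ^ 3 ≤ 432 * ‖y‖ ^ 4 * aronsson p y ^ 3 := by
  have hG := pow_nonneg (aronsson_nonneg hp hy) 3
  have hle := mul_le_mul_of_nonneg_left
    (quartic_sum_pow_three_le (parRoot_nonneg hp y) (parRoot_neg_nonneg hp y)) hG
  rw [parRoot_pow_three_add hp, ← mul_pow, aronsson_mul_eq_inner hp] at hle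
  linarith

lemma aronsson_smul_pow_three (hp : ‖p‖ = 1) {a : ℝ} (ha : 0 < a) :
    aronsson p (a • p) ^ 3 = 1 / (16 * a) := by
  have hnorm : ‖a • p‖ = a := by rw [norm_smul, hp, mul_one, Real.norm_of_nonneg ha.le]
  have hinner : ⟪p, a • p⟫_ℝ = a := by
    rw [real_inner_smul_right, real_inner_self_eq_norm_sq, hp, one_pow, mul_one]
  have hs := parRoot_pow_three hp (a • p)
  have ht : parRoot (-p) (a • p) = 0 := by
    rw [← pow_eq_zero_iff three_ne_zero, parRoot_neg_pow_three hp, hnorm, hinner, sub_self]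
  rw [hnorm, hinner] at hs
  rw [aronsson, ht, hnorm, zero_pow two_ne_zero, sub_zero, div_pow, ← pow_mul, mul_comm 2 3,
    pow_mul, hs]
  field_simp
  norm_num

end Estimates

section ShiftedPole

lemma isAbsolutelyMinimalOn_aronsson_sub (h : 1 < Module.rank ℝ E) (hp : ‖p‖ = 1) {x₀ : E}
    {U : Set E} (hx₀ : x₀ ∉ closure U) : IsAbsolutelyMinimalOn (fun x ↦ aronsson p (x₀ - x)) U := by
  have h0 : (0 : E) ∉ closure (IsometryEquiv.subLeft x₀ '' U) := by
    rw [← IsometryEquiv.coe_toHomeomorph, ← Homeomorph.image_closure]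
    rintro ⟨x, hx, hx0⟩
    exact hx₀ (sub_eq_zero.1 hx0 ▸ hx)
  have hAM := (isAbsolutelyMinimalOn_aronsson h hp h0).comp_isometryEquiv (.subLeft x₀)
  rwa [preimage_image_eq _ (IsometryEquiv.injective _)] at hAM

lemma exists_lipschitzOnWith_aronsson_sub (hp : ‖p‖ = 1) {x₀ : E} {K : Set E} (hK : IsCompact K)
    (hconv : Convex ℝ K) (hx₀ : x₀ ∉ K) :
    ∃ L : ℝ≥0, LipschitzOnWith L (fun x ↦ aronsson p (x₀ - x)) K := by
  have h0 : (0 : E) ∉ {x₀} - K := by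
    rintro ⟨y, rfl, x, hx, hx0⟩
    exact hx₀ (sub_eq_zero.1 hx0 ▸ hx)
  obtain ⟨L, hL⟩ := exists_lipschitzOnWith_aronsson hp (by
    simpa only [singleton_sub] using hK.image (continuous_sub_left x₀))
    ((convex_singleton x₀).sub hconv) h0
  exact ⟨L * 1, hL.comp (IsometryEquiv.subLeft x₀).isometry.lipschitz.lipschitzOnWith
    fun x hx ↦ sub_mem_sub rfl hx⟩

variable {x : E} {δ η T : ℝ}

lemma inner_one_add_smul_sub (hp : ‖p‖ = 1) (η : ℝ) (x : E) :
    ⟪p, (1 + η) • p - x⟫_ℝ = 1 + η - ⟪p, x⟫_ℝ := by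
  rw [inner_sub_right, real_inner_smul_right, real_inner_self_eq_norm_sq, hp]
  ring

lemma norm_one_add_smul_sub_sq (hp : ‖p‖ = 1) (η : ℝ) (x : E) :
    ‖(1 + η) • p - x‖ ^ 2 = dist x p ^ 2 + 2 * η * (1 - ⟪p, x⟫_ℝ) + η ^ 2 := by
  rw [dist_eq_norm, norm_sub_sq_real, norm_sub_sq_real, real_inner_smul_left, norm_smul, hp,
    Real.norm_eq_abs, mul_one, sq_abs, real_inner_comm p x]
  ring

lemma dist_sq_eq_of_mem_sphere (hp : ‖p‖ = 1) (hx : x ∈ sphere 0 1) :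
    dist x p ^ 2 = 2 * (1 - ⟪p, x⟫_ℝ) := by
  rw [dist_eq_norm, norm_sub_sq_real, mem_sphere_zero_iff_norm.1 hx, hp, real_inner_comm]
  ring

lemma inner_le_one_of_mem_closedBall (hp : ‖p‖ = 1) (hx : x ∈ closedBall 0 1) : ⟪p, x⟫_ℝ ≤ 1 := by
  have hle := real_inner_le_norm p x
  rw [hp, one_mul] at hle
  exact hle.trans (mem_closedBall_zero_iff.1 hx)

lemma inner_one_add_smul_sub_nonneg (hp : ‖p‖ = 1) (hη : 0 ≤ η) (hx : x ∈ closedBall 0 1) :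
    0 ≤ ⟪p, (1 + η) • p - x⟫_ℝ := by
  rw [inner_one_add_smul_sub hp]
  linarith [inner_le_one_of_mem_closedBall hp hx]

lemma one_add_smul_notMem_closedBall (hp : ‖p‖ = 1) (hη : 0 < η) :
    (1 + η) • p ∉ closedBall (0 : E) 1 := by
  rw [mem_closedBall_zero_iff, norm_smul, hp, mul_one, Real.norm_of_nonneg (by positivity)]
  linarith

lemma one_le_mul_aronsson_of_mem_cap (hp : ‖p‖ = 1) (hT : 0 < T) (hδ : T ^ 3 = δ)
    (hx : x ∈ sphere 0 1 ∩ closedBall p δ) : 1 ≤ 20 * T * aronsson p ((1 + δ) • p - x) := by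
  have hδ0 : 0 < δ := hδ ▸ pow_pos hT 3
  have hX : δ ≤ ⟪p, (1 + δ) • p - x⟫_ℝ := by
    rw [inner_one_add_smul_sub hp]
    linarith [inner_le_one_of_mem_closedBall hp (sphere_subset_closedBall hx.1)]
  have hR : ‖(1 + δ) • p - x‖ ≤ 2 * δ := by
    have hsum : (1 + δ) • p - x = δ • p + (p - x) := by module
    have hdist : ‖p - x‖ ≤ δ := dist_eq_norm p x ▸ mem_closedBall'.1 hx.2
    have hδp : ‖δ • p‖ = δ := by rw [norm_smul, hp, mul_one, Real.norm_of_nonneg hδ0.le]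
    linarith [hsum ▸ norm_add_le (δ • p) (p - x)]
  have hG := aronsson_nonneg hp (hδ0.le.trans hX)
  have hcube : δ ^ 3 ≤ δ ^ 3 * (20 * T * aronsson p ((1 + δ) • p - x)) ^ 3 := by
    calc δ ^ 3 ≤ ⟪p, (1 + δ) • p - x⟫_ℝ ^ 3 := by gcongr
      _ ≤ 432 * ‖(1 + δ) • p - x‖ ^ 4 * aronsson p ((1 + δ) • p - x) ^ 3 :=
        inner_pow_three_le hp (hδ0.le.trans hX)
      _ ≤ 432 * (2 * δ) ^ 4 * aronsson p ((1 + δ) • p - x) ^ 3 := by gcongr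
      _ ≤ δ ^ 3 * (20 * T * aronsson p ((1 + δ) • p - x)) ^ 3 := by
        have hexp : (20 * T * aronsson p ((1 + δ) • p - x)) ^ 3 =
            8000 * δ * aronsson p ((1 + δ) • p - x) ^ 3 := by rw [← hδ]; ring
        rw [hexp]
        linarith [mul_nonneg (pow_nonneg hδ0.le 4) (pow_nonneg hG 3)]
  exact (one_le_pow_iff_of_nonneg (by positivity) three_ne_zero).1
    (one_le_of_le_mul_left₀ (pow_pos hδ0 3) hcube)

lemma norm_mul_aronsson_pow_three_le_one (hp : ‖p‖ = 1) (hy : 0 ≤ ⟪p, y⟫_ℝ) :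
    16 * ‖y‖ * aronsson p y ^ 3 ≤ 1 := by
  rcases eq_or_ne y 0 with rfl | hy0
  · simp
  have hR : 0 < ‖y‖ := norm_pos_iff.2 hy0
  have hinner : ⟪p, y⟫_ℝ ≤ ‖y‖ := by simpa [hp] using real_inner_le_norm p y
  have hle := (norm_pow_four_mul_aronsson_pow_three_le hp hy).trans (pow_le_pow_left₀ hy hinner 3)
  refine le_of_mul_le_mul_left ?_ (pow_pos hR 3)
  linarith

lemma mul_aronsson_le_half (hp : ‖p‖ = 1) (hδ : T ^ 3 = δ) (hη : 0 ≤ η)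
    (hx : x ∈ closedBall 0 1) (hxp : dist x p = δ / 2) :
    T * aronsson p ((1 + η) • p - x) ≤ 1 / 2 := by
  have hR : δ / 2 ≤ ‖(1 + η) • p - x‖ := by
    refine le_of_sq_le_sq ?_ (norm_nonneg _)
    rw [norm_one_add_smul_sub_sq hp, hxp]
    have := mul_nonneg hη (sub_nonneg.2 (inner_le_one_of_mem_closedBall hp hx))
    nlinarith [sq_nonneg η]
  have hX := inner_one_add_smul_sub_nonneg hp hη hx
  have hG := aronsson_nonneg hp hX
  have hle := norm_mul_aronsson_pow_three_le_one hp hX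
  refine le_of_pow_le_pow_left₀ three_ne_zero (by positivity) ?_
  rw [mul_pow, hδ]
  linarith [mul_le_mul_of_nonneg_right hR (pow_nonneg hG 3)]

lemma aronsson_le_third (hp : ‖p‖ = 1) (hη : 0 < η) (hx : x ∈ sphere 0 1)
    (hηx : 100 * η ≤ dist x p ^ 2) : aronsson p ((1 + η) • p - x) ≤ 1 / 3 := by
  have hX := inner_one_add_smul_sub_nonneg hp hη.le (sphere_subset_closedBall hx)
  have hle := norm_pow_four_mul_aronsson_pow_three_le hp hX
  have hG := pow_nonneg (aronsson_nonneg hp hX) 3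
  rw [dist_sq_eq_of_mem_sphere hp hx] at hηx
  set q := 1 - ⟪p, x⟫_ℝ
  have hq0 : 0 < q := by linarith
  have hq2 : q ≤ 2 := by
    have hinner := abs_le.1 (abs_real_inner_le_norm p x)
    rw [hp, mem_sphere_zero_iff_norm.1 hx] at hinner
    linarith [hinner.1]
  have hR : 2 * q ≤ ‖(1 + η) • p - x‖ ^ 2 := by
    rw [norm_one_add_smul_sub_sq hp, dist_sq_eq_of_mem_sphere hp hx]
    nlinarith
  have hXq : ⟪p, (1 + η) • p - x⟫_ℝ ≤ 51 / 50 * q := by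
    rw [inner_one_add_smul_sub hp]
    linarith
  have hcube : q ^ 2 * (64 * aronsson p ((1 + η) • p - x) ^ 3) ≤ q ^ 2 * ((51 / 50) ^ 3 * 2) := by
    calc q ^ 2 * (64 * aronsson p ((1 + η) • p - x) ^ 3)
        = 16 * (2 * q) ^ 2 * aronsson p ((1 + η) • p - x) ^ 3 := by ring
      _ ≤ 16 * (‖(1 + η) • p - x‖ ^ 2) ^ 2 * aronsson p ((1 + η) • p - x) ^ 3 := by gcongr
      _ ≤ ⟪p, (1 + η) • p - x⟫_ℝ ^ 3 := by rwa [← pow_mul]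
      _ ≤ (51 / 50 * q) ^ 3 := by gcongr
      _ = q ^ 2 * ((51 / 50) ^ 3 * q) := by ring
      _ ≤ q ^ 2 * ((51 / 50) ^ 3 * 2) := by gcongr
  refine le_of_pow_le_pow_left₀ three_ne_zero (by norm_num) ?_
  linarith [le_of_mul_le_mul_left hcube (pow_pos hq0 2)]

end ShiftedPole

section HarmonicMeasure

/-- The functions competing in the infimum that defines the `∞`-harmonic measure of `A` with
respect to the unit ball. -/
structure IsCompetitor {F : Type*} [NormedAddCommGroup F] (A : Set F) (u : F → ℝ) : Prop where
  nonneg : ∀ x ∈ closedBall (0 : F) 1, 0 ≤ u x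
  exists_lipschitzOnWith : ∃ K : ℝ≥0, LipschitzOnWith K u (closedBall 0 1)
  isAbsolutelyMinimalOn : IsAbsolutelyMinimalOn u (ball 0 1)
  one_le : ∀ x ∈ A, 1 ≤ u x

lemma isCompetitor_one {F : Type*} [NormedAddCommGroup F] (A : Set F) :
    IsCompetitor A fun _ ↦ 1 where
  nonneg _ _ := zero_le_one
  exists_lipschitzOnWith := ⟨0, (LipschitzWith.const 1).lipschitzOnWith⟩
  isAbsolutelyMinimalOn := isAbsolutelyMinimalOn_const 1 _
  one_le _ _ := le_rfl

lemma IsCompetitor.omegaInf_le {n : ℕ} {A : Set (Euc n)} {u : Euc n → ℝ} (hu : IsCompetitor A u) :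
    omegaInf n A ≤ u 0 := by
  refine csInf_le ⟨0, ?_⟩
    ⟨u, hu.nonneg, hu.exists_lipschitzOnWith, hu.isAbsolutelyMinimalOn, hu.one_le, rfl⟩
  rintro _ ⟨v, hv, -, -, -, rfl⟩
  exact hv 0 (mem_closedBall_self zero_le_one)

lemma le_omegaInf {n : ℕ} {A : Set (Euc n)} {a : ℝ} (h : ∀ u, IsCompetitor A u → a ≤ u 0) :
    a ≤ omegaInf n A := by
  have hone := isCompetitor_one A
  refine le_csInf ⟨1, fun _ ↦ 1, hone.nonneg, hone.exists_lipschitzOnWith,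
    hone.isAbsolutelyMinimalOn, hone.one_le, rfl⟩ ?_
  rintro _ ⟨u, hnonneg, hLip, hAM, hA, rfl⟩
  exact h u ⟨hnonneg, hLip, hAM, hA⟩

variable {u : E → ℝ} {δ T : ℝ}

lemma isCompetitor_mul_aronsson [ProperSpace E] (h : 1 < Module.rank ℝ E) (hp : ‖p‖ = 1)
    (hT : 0 < T) (hδ : T ^ 3 = δ) :
    IsCompetitor (sphere 0 1 ∩ closedBall p δ)
      fun x ↦ 20 * T * aronsson p ((1 + δ) • p - x) where
  nonneg x hx := mul_nonneg (by positivity)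
    (aronsson_nonneg hp (inner_one_add_smul_sub_nonneg hp (hδ ▸ (pow_pos hT 3).le) hx))
  exists_lipschitzOnWith := by
    obtain ⟨L, hL⟩ := exists_lipschitzOnWith_aronsson_sub hp (isCompact_closedBall (0 : E) 1)
      (convex_closedBall 0 1) (one_add_smul_notMem_closedBall hp (hδ ▸ pow_pos hT 3))
    exact ⟨_, (lipschitzWith_smul (20 * T)).comp_lipschitzOnWith hL⟩
  isAbsolutelyMinimalOn := by
    refine (isAbsolutelyMinimalOn_aronsson_sub h hp fun hcl ↦ ?_).const_mul _
    exact one_add_smul_notMem_closedBall hp (hδ ▸ pow_pos hT 3) (closure_ball_subset_closedBall hcl)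
  one_le _ hx := one_le_mul_aronsson_of_mem_cap hp hT hδ hx

lemma mul_aronsson_one_add_smul_le (hp : ‖p‖ = 1) (hT : 0 < T) (hδ : 0 < δ) :
    20 * T * aronsson p ((1 + δ) • p - 0) ≤ 10 * T := by
  suffices aronsson p ((1 + δ) • p - 0) ≤ 1 / 2 by nlinarith
  refine le_of_pow_le_pow_left₀ three_ne_zero (by norm_num) ?_
  rw [sub_zero, aronsson_smul_pow_three hp (by positivity), div_le_iff₀ (by positivity)]
  linarith

lemma IsCompetitor.one_sub_dist_div_le (hu : IsCompetitor (sphere 0 1 ∩ closedBall p δ) u)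
    (hp : ‖p‖ = 1) (hδ : 0 < δ) {x : E} (hx : x ∈ closedBall 0 1) : 1 - dist x p / δ ≤ u x := by
  obtain ⟨K, hK⟩ := hu.exists_lipschitzOnWith
  have hsphere : ∀ x ∈ sphere (0 : E) 1, 1 - dist x p / δ ≤ u x := fun x hx ↦ by
    rcases le_total (dist x p) δ with hle | hle
    · linarith [hu.one_le x ⟨hx, hle⟩, div_nonneg (dist_nonneg (x := x) (y := p)) hδ.le]
    · linarith [hu.nonneg x (sphere_subset_closedBall hx), (one_le_div hδ).2 hle]
  rcases (mem_closedBall.1 hx).eq_or_lt with hxs | hxb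
  · exact hsphere x hxs
  · have hcone := hu.isAbsolutelyMinimalOn.cone_le
      (hK.continuousOn.mono closure_ball_subset_closedBall) isOpen_ball (z := p) (c := 1)
      (L := δ⁻¹.toNNReal) (by simp [hp])
    simp only [Real.coe_toNNReal _ (inv_nonneg.2 hδ.le), inv_mul_eq_div] at hcone
    exact hcone (fun y hy ↦ hsphere y (frontier_ball_subset_sphere hy)) hxb

lemma IsCompetitor.mul_aronsson_sub_le (hu : IsCompetitor (sphere 0 1 ∩ closedBall p δ) u)
    (hp : ‖p‖ = 1) (hT : 0 < T) (hδ : T ^ 3 = δ) {x : E}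
    (hx : x ∈ frontier (ball 0 1 \ closedBall p (δ / 2))) :
    T * aronsson p ((1 + δ ^ 2 / 400) • p - x) - u x ≤ T / 3 := by
  have hδ0 : 0 < δ := hδ ▸ pow_pos hT 3
  rw [(isOpen_ball.sdiff isClosed_closedBall).frontier_eq] at hx
  have hx1 : x ∈ closedBall 0 1 :=
    closure_ball_subset_closedBall (closure_mono sdiff_subset hx.1)
  have hx2 : δ / 2 ≤ dist x p := by
    have hcl : ball 0 1 \ closedBall p (δ / 2) ⊆ {y | δ / 2 ≤ dist y p} :=
      fun y hy ↦ mem_ofPred_eq ▸ (not_le.1 hy.2).le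
    exact closure_minimal hcl (isClosed_le continuous_const (by fun_prop)) hx.1
  rcases hx2.eq_or_lt with hxd | hxd
  · have hhalf : 1 / 2 ≤ u x := by
      have hcone := hu.one_sub_dist_div_le hp hδ0 hx1
      rw [← hxd, div_right_comm, div_self hδ0.ne'] at hcone
      linarith
    linarith [mul_aronsson_le_half hp hδ (η := δ ^ 2 / 400) (by positivity) hx1 hxd.symm]
  · have hxs : x ∈ sphere 0 1 :=
      (mem_closedBall.1 hx1).antisymm (not_lt.1 fun hlt ↦ hx.2 ⟨hlt, not_le.2 hxd⟩)
    have hthird := aronsson_le_third hp (η := δ ^ 2 / 400) (by positivity) hxs (by nlinarith)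
    nlinarith [hu.nonneg x hx1]

theorem IsCompetitor.div_le_apply_zero [ProperSpace E]
    (hu : IsCompetitor (sphere 0 1 ∩ closedBall p δ) u) (h : 1 < Module.rank ℝ E) (hp : ‖p‖ = 1)
    (hT : 0 < T) (hδ : T ^ 3 = δ) (hδ1 : δ ≤ 1) : T / 24 ≤ u 0 := by
  have : Nontrivial E := ⟨p, 0, norm_ne_zero_iff.1 (hp ▸ one_ne_zero)⟩
  have hδ0 : 0 < δ := hδ ▸ pow_pos hT 3
  obtain ⟨K, hK⟩ := hu.exists_lipschitzOnWith
  set Ω := ball (0 : E) 1 \ closedBall p (δ / 2)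
  have hcl : closure Ω ⊆ closedBall 0 1 :=
    (closure_mono sdiff_subset).trans closure_ball_subset_closedBall
  have hpole : (1 + δ ^ 2 / 400) • p ∉ closedBall (0 : E) 1 :=
    one_add_smul_notMem_closedBall hp (by positivity)
  obtain ⟨L, hL⟩ := exists_lipschitzOnWith_aronsson_sub hp (isCompact_closedBall (0 : E) 1)
    (convex_closedBall 0 1) hpole
  have hcomp : T * aronsson p ((1 + δ ^ 2 / 400) • p - 0) - u 0 ≤ T / 3 :=
    ((isAbsolutelyMinimalOn_aronsson_sub h hp fun hx ↦ hpole (hcl hx)).const_mul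
      T).sub_le_of_frontier (hu.isAbsolutelyMinimalOn.mono sdiff_subset)
      ((hL.continuousOn.mono hcl).const_smul T) (hK.continuousOn.mono hcl)
      (isOpen_ball.sdiff isClosed_closedBall) (isBounded_ball.subset sdiff_subset)
      (fun x hx ↦ hu.mul_aronsson_sub_le hp hT hδ hx)
      ⟨mem_ball_self one_pos, by simp [hp]; linarith⟩
  have hcenter : 3 / 8 ≤ aronsson p ((1 + δ ^ 2 / 400) • p - 0) := by
    refine le_of_pow_le_pow_left₀ three_ne_zero (aronsson_nonneg hp
      (inner_one_add_smul_sub_nonneg hp (by positivity) (mem_closedBall_self zero_le_one))) ?_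
    rw [sub_zero, aronsson_smul_pow_three hp (by positivity), le_div_iff₀ (by positivity)]
    nlinarith
  nlinarith

end HarmonicMeasure

end Aronsson

end

/-- Dimension-independent constants `c, C > 0` such that the `∞`-harmonic measure (from
the center of the unit ball of `ℝⁿ`, `n ≥ 2`) of any spherical cap of radius `δ ∈ (0,1]`
is between `c δ^{1/3}` and `C δ^{1/3}`. -/
theorem stmt7 :
    ∃ c : ℝ, 0 < c ∧ ∃ C : ℝ, 0 < C ∧
      ∀ n : ℕ, 2 ≤ n → ∀ p : Euc n, ‖p‖ = 1 → ∀ δ : ℝ, 0 < δ → δ ≤ 1 →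
        c * δ ^ ((1 : ℝ) / 3) ≤
            omegaInf n (sphere (0 : Euc n) 1 ∩ closedBall p δ) ∧
          omegaInf n (sphere (0 : Euc n) 1 ∩ closedBall p δ) ≤
            C * δ ^ ((1 : ℝ) / 3) := by
  refine ⟨1 / 24, by norm_num, 10, by norm_num, fun n hn p hp δ hδ hδ1 ↦ ?_⟩
  have hrank : 1 < Module.rank ℝ (Euc n) := by
    rw [← Module.finrank_eq_rank, finrank_euclideanSpace_fin]
    exact_mod_cast hn
  have hT : 0 < δ ^ ((1 : ℝ) / 3) := Real.rpow_pos_of_pos hδ _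
  have hTδ : (δ ^ ((1 : ℝ) / 3)) ^ 3 = δ := by
    rw [← Real.rpow_natCast, ← Real.rpow_mul hδ.le]
    norm_num
  constructor
  · refine le_omegaInf fun u hu ↦ ?_
    rw [one_div_mul_eq_div]
    exact hu.div_le_apply_zero hrank hp hT hTδ hδ1
  · exact (isCompetitor_mul_aronsson hrank hp hT hTδ).omegaInf_le.trans
      (mul_aronsson_one_add_smul_le hp hT hδ)

end
end

section
/- Let X be a length space, Y ⊆ X nonempty, and F : Y → ℝ continuous with 0 ≤ F ≤ 1; let S ⊆ Y be the support of F (the closure of {y ∈ Y : F(y) ≠ 0}). Suppose there exist an integer k ≥ 1 and constants ε₀ > 0, d_min > 0 and γ ∈ (0,1) such that for every x ∈ X with d(x,S) ≥ d_min there are points x = z₀, z₁, …, z_k with z_k ∈ Y, F(z_k) = 0, and d(zᵢ,S) ≥ 2·d(zᵢ,z_{i−1}) + 2ε₀ + γ·d(z₀,S) for i = 1,…,k. Then every absolutely minimal (AM) extension u : X → ℝ of F satisfies 0 ≤ u(x) ≤ (1 − 2^{−k})^{log_γ(d_min/d(x,S))} for every x ∈ X with d(x,S) > 0. -/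
open Metric Set

noncomputable section

/-- The length of a continuous path: its total variation. -/
def pathLength {X : Type*} [MetricSpace X] {x y : X} (γ : Path x y) : ENNReal :=
  eVariationOn (fun t => γ t) (Set.univ : Set unitInterval)

/-- A metric space is a length space if the distance between any two points equals the
infimum of the lengths of continuous paths joining them. -/
def IsLengthSpace (X : Type*) [MetricSpace X] : Prop :=
  ∀ x y : X, edist x y = ⨅ γ : Path x y, pathLength γ

/-- `u : X → ℝ` is an absolutely minimal (AM) extension of `F` prescribed on `Y`:
`u` is Lipschitz, `u = F` on `Y`, and `Lip_U u = Lip_{∂U} u` for every open `U ⊆ X \ Y`. -/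
def IsAMExtension {X : Type*} [MetricSpace X] (Y : Set X) (F u : X → ℝ) : Prop :=
  lipOn u Set.univ < ⊤ ∧ Set.EqOn u F Y ∧
    ∀ U : Set X, IsOpen U → U ⊆ Yᶜ → lipOn u U = lipOn u (frontier U)

/-!
Comparison with cones: let `V` be open and disjoint from `Y`, `z ∉ V` and `b ≥ 0`. An AM extension
`u` that lies below the cone `a + b * dist · z` on `∂V` lies below it on `V`. Indeed, let `U` be the
part of `V` where `u` exceeds the cone. On `∂U` the two agree, so `u` is `b`-Lipschitz on
`closure U`. An almost shortest path from `x ∈ U` towards `z` leaves `U` at a point of `∂U`, and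
there the Lipschitz bound gives `u x ≤ a + b * dist x z`.

With `b = 0` this bounds `u` by its values on `Y`. On the ball of radius `2 * dist x z` around `z`,
if `u ≤ M` there and `u ≤ u z` at its points of `Y`, it gives `u x ≤ (u z + M) / 2`. Along a plan
of `k` steps ending at a zero of `u`, a bound `M` on `{w | γ * D ≤ infDist w S}` thus improves to
`(1 - 2⁻ᵏ) * M` on `{w | D ≤ infDist w S}`. Starting from `u ≤ 1`, this is iterated as
long as the distances to `S` involved are at least `dmin`, which allows about
`log_γ (dmin / infDist x S)` rounds.
-/

section LengthSpace

variable {X : Type*} [MetricSpace X] {x z : X}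

theorem edist_add_edist_le_pathLength (p : Path x z) (t : unitInterval) :
    edist x (p t) + edist (p t) z ≤ pathLength p := by
  have before : edist x (p t) ≤ eVariationOn (fun s ↦ p s) (Iic t) := by
    simpa only [p.source] using
      eVariationOn.edist_le (fun s ↦ p s) (mem_Iic.2 unitInterval.nonneg') (mem_Iic.2 le_rfl)
  have after : edist (p t) z ≤ eVariationOn (fun s ↦ p s) (Ici t) := by
    simpa only [p.target] using
      eVariationOn.edist_le (fun s ↦ p s) (mem_Ici.2 le_rfl) (mem_Ici.2 unitInterval.le_one')
  calc edist x (p t) + edist (p t) z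
      ≤ eVariationOn (fun s ↦ p s) (Iic t) + eVariationOn (fun s ↦ p s) (Ici t) :=
        add_le_add before after
    _ ≤ eVariationOn (fun s ↦ p s) (Iic t ∪ Ici t) :=
        eVariationOn.add_le_union _ fun _ hr _ hs ↦ le_trans hr hs
    _ ≤ pathLength p := eVariationOn.mono _ (subset_univ _)

theorem exists_path_apply_mem_frontier {Z : Type*} [TopologicalSpace Z] {U : Set Z} {x z : Z}
    (p : Path x z) (hx : x ∈ U) (hz : z ∉ U) : ∃ t, p t ∈ frontier U := by
  have hne : (p ⁻¹' U).Nonempty := ⟨0, by simpa only [mem_preimage, p.source]⟩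
  have hne_univ : p ⁻¹' U ≠ univ :=
    (ne_univ_iff_exists_notMem _).2 ⟨1, by simpa only [mem_preimage, p.target]⟩
  obtain ⟨t, ht⟩ := nonempty_frontier_iff.2 ⟨hne, hne_univ⟩
  exact ⟨t, p.continuous.frontier_preimage_subset U ht⟩

theorem IsLengthSpace.exists_mem_frontier_dist_add_dist_le (hX : IsLengthSpace X) {U : Set X}
    (hx : x ∈ U) (hz : z ∉ U) {δ : ℝ} (hδ : 0 < δ) :
    ∃ y ∈ frontier U, dist x y + dist y z ≤ dist x z + δ := by
  have hlt : ⨅ p : Path x z, pathLength p < edist x z + ENNReal.ofReal δ := by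
    rw [← hX x z]
    exact ENNReal.lt_add_right (edist_ne_top x z) (ENNReal.ofReal_pos.2 hδ).ne'
  obtain ⟨p, hp⟩ := iInf_lt_iff.1 hlt
  obtain ⟨t, ht⟩ := exists_path_apply_mem_frontier p hx hz
  refine ⟨p t, ht, ?_⟩
  have hle := (edist_add_edist_le_pathLength p t).trans hp.le
  rw [edist_dist, edist_dist, edist_dist, ← ENNReal.ofReal_add dist_nonneg dist_nonneg,
    ← ENNReal.ofReal_add dist_nonneg hδ.le] at hle
  exact (ENNReal.ofReal_le_ofReal_iff (by positivity)).1 hle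

end LengthSpace

section LipOn

variable {X : Type*} [MetricSpace X]

theorem lipOn_le_coe_iff_lipschitzOnWith {u : X → ℝ} {S : Set X} {K : NNReal} :
    lipOn u S ≤ K ↔ LipschitzOnWith K u S := by
  simp only [lipOn, iSup_le_iff, lipschitzOnWith_iff_dist_le_mul, Real.dist_eq]
  refine forall₂_congr fun x _ ↦ forall₂_congr fun y _ ↦ ?_
  rcases eq_or_ne x y with rfl | hxy
  · simp
  · rw [← ENNReal.ofReal_coe_nnreal, ENNReal.ofReal_le_ofReal_iff K.coe_nonneg,
      div_le_iff₀ (dist_pos.2 hxy)]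
    exact forall_prop_of_true hxy

theorem lipOn_neg (u : X → ℝ) (S : Set X) : lipOn (-u) S = lipOn u S := by
  simp only [lipOn, Pi.neg_apply, neg_sub_neg, abs_sub_comm]

end LipOn

namespace IsAMExtension

variable {X : Type*} [MetricSpace X] {Y : Set X} {F u : X → ℝ}

theorem neg (hu : IsAMExtension Y F u) : IsAMExtension Y (-F) (-u) := by
  obtain ⟨hlip, heq, hAM⟩ := hu
  exact ⟨by rwa [lipOn_neg], fun y hy ↦ congrArg Neg.neg (heq hy),
    fun U hU hUY ↦ by rw [lipOn_neg, lipOn_neg, hAM U hU hUY]⟩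

theorem continuous (hu : IsAMExtension Y F u) : Continuous u := by
  have hle : lipOn u univ ≤ (lipOn u univ).toNNReal := (ENNReal.coe_toNNReal hu.1.ne).ge
  exact (lipschitzOnWith_univ.1 (lipOn_le_coe_iff_lipschitzOnWith.1 hle)).continuous

theorem lipschitzOnWith_closure (hu : IsAMExtension Y F u) {U : Set X} (hU : IsOpen U)
    (hUY : U ⊆ Yᶜ) {K : NNReal} (hK : LipschitzOnWith K u (frontier U)) :
    LipschitzOnWith K u (closure U) := by
  refine LipschitzOnWith.closure hu.continuous.continuousOn ?_
  rw [← lipOn_le_coe_iff_lipschitzOnWith] at hK ⊢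
  rwa [hu.2.2 U hU hUY]

theorem apply_le_cone_of_eqOn_frontier (hu : IsAMExtension Y F u) (hX : IsLengthSpace X)
    {U : Set X} (hU : IsOpen U) (hUY : U ⊆ Yᶜ) {z : X} (hz : z ∉ U) {a b : ℝ} (hb : 0 ≤ b)
    (hcone : EqOn u (fun p ↦ a + b * dist p z) (frontier U)) {x : X} (hx : x ∈ U) :
    u x ≤ a + b * dist x z := by
  lift b to NNReal using hb
  have hlip_frontier : LipschitzOnWith b u (frontier U) := by
    refine LipschitzOnWith.of_dist_le_mul fun p hp q hq ↦ ?_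
    rw [hcone hp, hcone hq, Real.dist_eq, add_sub_add_left_eq_sub, ← mul_sub, abs_mul,
      NNReal.abs_eq]
    exact mul_le_mul_of_nonneg_left (abs_dist_sub_le p q z) b.coe_nonneg
  have hlip := hu.lipschitzOnWith_closure hU hUY hlip_frontier
  have hle_add (δ : ℝ) (hδ : 0 < δ) : u x ≤ a + b * (dist x z + δ) := by
    obtain ⟨y, hy, hxyz⟩ := hX.exists_mem_frontier_dist_add_dist_le hx hz hδ
    calc u x ≤ u y + b * dist x y :=
          hlip.le_add_mul (subset_closure hx) (frontier_subset_closure hy)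
      _ = a + b * (dist x y + dist y z) := by rw [hcone hy]; ring
      _ ≤ a + b * (dist x z + δ) := by gcongr
  have hlim : Filter.Tendsto (fun δ : ℝ ↦ a + b * (dist x z + δ)) (nhdsWithin 0 (Ioi 0))
      (nhds (a + b * (dist x z + 0))) :=
    (Continuous.tendsto (by fun_prop) 0).mono_left nhdsWithin_le_nhds
  simpa only [add_zero] using
    ge_of_tendsto hlim (eventually_mem_nhdsWithin.mono hle_add)

theorem apply_le_cone_of_frontier (hu : IsAMExtension Y F u) (hX : IsLengthSpace X)
    {V : Set X} (hV : IsOpen V) (hVY : V ⊆ Yᶜ) {z : X} (hz : z ∉ V) {a b : ℝ} (hb : 0 ≤ b)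
    (hcone : ∀ p ∈ frontier V, u p ≤ a + b * dist p z) {x : X} (hx : x ∈ V) :
    u x ≤ a + b * dist x z := by
  have hcont : Continuous fun p ↦ a + b * dist p z := by fun_prop
  by_contra! hlt
  set U : Set X := V ∩ {p | a + b * dist p z < u p}
  have hfrontier : EqOn u (fun p ↦ a + b * dist p z) (frontier U) := by
    intro p hp
    rcases frontier_inter_subset _ _ hp with ⟨hpV, hpc⟩ | ⟨-, hpf⟩
    · exact (hcone p hpV).antisymm (closure_lt_subset_le hcont hu.continuous hpc)
    · exact (frontier_lt_subset_eq hcont hu.continuous hpf).symm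
  exact hlt.not_ge <| hu.apply_le_cone_of_eqOn_frontier hX
    (hV.inter (isOpen_lt hcont hu.continuous)) (inter_subset_left.trans hVY) (fun h ↦ hz h.1) hb
    hfrontier ⟨hx, hlt⟩

theorem apply_le (hu : IsAMExtension Y F u) (hX : IsLengthSpace X) (hY : Y.Nonempty) {c : ℝ}
    (hF : ∀ y ∈ Y, F y ≤ c) (x : X) : u x ≤ c := by
  obtain ⟨y₀, hy₀⟩ := hY
  have huY : ∀ y ∈ Y, u y ≤ c := fun y hy ↦ (hu.2.1 hy).trans_le (hF y hy)
  by_contra! hx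
  have hle : u x ≤ c + 0 * dist x y₀ :=
    hu.apply_le_cone_of_frontier hX (isOpen_lt continuous_const hu.continuous)
      (fun w hw hwY ↦ (huY w hwY).not_gt hw) (huY y₀ hy₀).not_gt le_rfl
      (fun p hp ↦ by
        rw [zero_mul, add_zero, ← frontier_lt_subset_eq continuous_const hu.continuous hp]) hx
  rw [zero_mul, add_zero] at hle
  exact hle.not_gt hx

theorem le_apply (hu : IsAMExtension Y F u) (hX : IsLengthSpace X) (hY : Y.Nonempty) {c : ℝ}
    (hF : ∀ y ∈ Y, c ≤ F y) (x : X) : c ≤ u x :=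
  neg_le_neg_iff.1 (hu.neg.apply_le hX hY (fun y hy ↦ neg_le_neg (hF y hy)) x)

theorem apply_le_cone_of_sphere (hu : IsAMExtension Y F u) (hX : IsLengthSpace X) {z : X}
    {R M : ℝ} (hR : 0 < R) (hz : u z ≤ M) (hM : ∀ w ∈ sphere z R, u w ≤ M)
    (hY : ∀ y ∈ Y ∩ ball z R, u y ≤ u z) {x : X} (hx : x ∈ ball z R) :
    u x ≤ u z + (M - u z) / R * dist x z := by
  have hslope : 0 ≤ (M - u z) / R := div_nonneg (sub_nonneg.2 hz) hR.le
  have hz_le_cone (p : X) : u z ≤ u z + (M - u z) / R * dist p z :=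
    le_add_of_nonneg_right (mul_nonneg hslope dist_nonneg)
  rcases le_or_gt (u x) (u z) with hxz | hxz
  · exact hxz.trans (hz_le_cone x)
  refine hu.apply_le_cone_of_frontier hX
    (isOpen_ball.inter (isOpen_lt continuous_const hu.continuous))
    (fun w hw hwY ↦ (hY w ⟨hwY, hw.1⟩).not_gt hw.2) (fun h ↦ lt_irrefl (u z) h.2) hslope
    (fun p hp ↦ ?_) ⟨hx, hxz⟩
  rcases frontier_inter_subset _ _ hp with ⟨hpR, -⟩ | ⟨-, hpz⟩
  · have hpR : p ∈ sphere z R := frontier_ball_subset_sphere hpR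
    calc u p ≤ M := hM p hpR
      _ = u z + (M - u z) / R * dist p z := by rw [mem_sphere.1 hpR]; field_simp; ring
  · exact (frontier_lt_subset_eq continuous_const hu.continuous hpz).symm.trans_le (hz_le_cone p)

theorem apply_le_midpoint (hu : IsAMExtension Y F u) (hX : IsLengthSpace X) {x z : X} {M : ℝ}
    (hM : ∀ w ∈ closedBall z (2 * dist x z), u w ≤ M)
    (hY : ∀ y ∈ Y ∩ ball z (2 * dist x z), u y ≤ u z) : u x ≤ (u z + M) / 2 := by
  have hz : u z ≤ M := hM z (mem_closedBall_self (by positivity))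
  rcases eq_or_ne x z with rfl | hxz
  · linarith
  have hpos : 0 < dist x z := dist_pos.2 hxz
  calc u x ≤ u z + (M - u z) / (2 * dist x z) * dist x z :=
        hu.apply_le_cone_of_sphere hX (by positivity) hz
          (fun w hw ↦ hM w (sphere_subset_closedBall hw)) hY (mem_ball.2 (by linarith))
    _ = (u z + M) / 2 := by field_simp; ring

end IsAMExtension

section Iteration

theorem le_of_forall_le_midpoint_succ {a : ℕ → ℝ} {M : ℝ} {k : ℕ}
    (h : ∀ i < k, a i ≤ (a (i + 1) + M) / 2) :
    a 0 ≤ (1 / 2) ^ k * a k + (1 - (1 / 2) ^ k) * M := by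
  induction k with
  | zero => simp
  | succ k ih =>
    calc a 0 ≤ (1 / 2) ^ k * a k + (1 - (1 / 2) ^ k) * M :=
        ih fun i hi ↦ h i (hi.trans k.lt_add_one)
      _ ≤ (1 / 2) ^ k * ((a (k + 1) + M) / 2) + (1 - (1 / 2) ^ k) * M := by
        gcongr
        exact h k k.lt_add_one
      _ = (1 / 2) ^ (k + 1) * a (k + 1) + (1 - (1 / 2) ^ (k + 1)) * M := by ring

variable {α : Type*} {u ρ : α → ℝ} {q γ d : ℝ}

theorem apply_le_pow_of_contraction (hd : 0 < d) (hγ₀ : 0 ≤ γ) (hγ₁ : γ ≤ 1) (hu : ∀ x, u x ≤ 1)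
    (hstep : ∀ D M, d ≤ D → (∀ w, γ * D ≤ ρ w → u w ≤ M) → ∀ x, D ≤ ρ x → u x ≤ q * M)
    (n : ℕ) {D : ℝ} (hD : d ≤ γ ^ n * D) {x : α} (hx : D ≤ ρ x) : u x ≤ q ^ (n + 1) := by
  induction n generalizing D x with
  | zero => simpa using hstep D 1 (by simpa using hD) (fun w _ ↦ hu w) x hx
  | succ n ih =>
    have hD₀ : 0 < D := pos_of_mul_pos_right (hd.trans_le hD) (by positivity)
    have hdD : d ≤ D := hD.trans (mul_le_of_le_one_left hD₀.le (pow_le_one₀ hγ₀ hγ₁))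
    rw [pow_succ' q]
    exact hstep D _ hdD (fun w hw ↦ ih (by rwa [← mul_assoc, ← pow_succ]) hw) x hx

theorem apply_le_rpow_logb_of_contraction (hd : 0 < d) (hγ : γ ∈ Ioo 0 1) (hq : q ∈ Ioc 0 1)
    (hu : ∀ x, u x ≤ 1)
    (hstep : ∀ D M, d ≤ D → (∀ w, γ * D ≤ ρ w → u w ≤ M) → ∀ x, D ≤ ρ x → u x ≤ q * M)
    {x : α} (hx : 0 < ρ x) : u x ≤ q ^ Real.logb γ (d / ρ x) := by
  obtain ⟨hγ₀, hγ₁⟩ := hγ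
  obtain ⟨hq₀, hq₁⟩ := hq
  set L := Real.logb γ (d / ρ x)
  rcases lt_or_ge L 0 with hL | hL
  · exact (hu x).trans (Real.one_le_rpow_of_pos_of_le_one_of_nonpos hq₀ hq₁ hL.le)
  have hd_le : d ≤ γ ^ ⌊L⌋₊ * ρ x := by
    rw [← div_le_iff₀ hx]
    calc d / ρ x = γ ^ L := (Real.rpow_logb hγ₀ hγ₁.ne (div_pos hd hx)).symm
      _ ≤ γ ^ (⌊L⌋₊ : ℝ) :=
        Real.rpow_le_rpow_of_exponent_ge hγ₀ hγ₁.le (Nat.floor_le hL)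
      _ = γ ^ ⌊L⌋₊ := Real.rpow_natCast _ _
  calc u x ≤ q ^ (⌊L⌋₊ + 1) :=
        apply_le_pow_of_contraction hd hγ₀.le hγ₁.le hu hstep _ hd_le le_rfl
    _ = q ^ ((⌊L⌋₊ : ℝ) + 1) := by rw [← Nat.cast_add_one, Real.rpow_natCast]
    _ ≤ q ^ L := Real.rpow_le_rpow_of_exponent_ge hq₀ hq₁ (Nat.lt_floor_add_one L).le

end Iteration

section GamePlan

variable {X : Type*} [MetricSpace X] {Y A S : Set X} {F u : X → ℝ} {k : ℕ} {γ d M : ℝ}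

/-- Every point at distance at least `d` from `S` is the start of a `k`-step game plan that ends in
`T` and each of whose steps arrives at a point farther from `S` than twice the step length, by a
margin proportional to the initial distance. This is the hypothesis of the paper with the tolerance
`ε₀` set to zero. -/
def HasGamePlans (S T : Set X) (k : ℕ) (γ d : ℝ) : Prop :=
  ∀ x, d ≤ infDist x S → ∃ z : ℕ → X, z 0 = x ∧ z k ∈ T ∧
    ∀ i < k, 2 * dist (z i) (z (i + 1)) + γ * infDist x S ≤ infDist (z (i + 1)) S

theorem IsAMExtension.apply_le_of_chain (hu : IsAMExtension Y F u) (hX : IsLengthSpace X)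
    (hu₀ : ∀ x, 0 ≤ u x) (hM : ∀ w ∈ A, u w ≤ M) (hYA : ∀ y ∈ Y ∩ A, u y = 0) {z : ℕ → X}
    (hz : ∀ i < k, closedBall (z (i + 1)) (2 * dist (z i) (z (i + 1))) ⊆ A) (hzk : u (z k) = 0) :
    u (z 0) ≤ (1 - (1 / 2) ^ k) * M := by
  have hmid : ∀ i < k, u (z i) ≤ (u (z (i + 1)) + M) / 2 := fun i hi ↦
    hu.apply_le_midpoint hX (fun w hw ↦ hM w (hz i hi hw)) fun y hy ↦
      (hYA y ⟨hy.1, hz i hi (ball_subset_closedBall hy.2)⟩).trans_le (hu₀ _)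
  simpa [hzk] using le_of_forall_le_midpoint_succ (a := u ∘ z) hmid

theorem closedBall_subset_setOf_le_infDist {z : X} {r m : ℝ} (h : r + m ≤ infDist z S) :
    closedBall z r ⊆ {w | m ≤ infDist w S} := by
  intro w hw
  have htri : infDist z S ≤ infDist w S + dist z w := infDist_le_infDist_add_dist
  rw [mem_closedBall'] at hw
  change m ≤ infDist w S
  linarith

theorem HasGamePlans.apply_le_mul (hplan : HasGamePlans S {w | u w = 0} k γ d)
    (hu : IsAMExtension Y F u) (hX : IsLengthSpace X) (hu₀ : ∀ x, 0 ≤ u x)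
    (hYS : ∀ y ∈ Y, 0 < infDist y S → u y = 0) (hd : 0 < d) (hγ : 0 < γ) {D : ℝ} (hD : d ≤ D)
    (hM : ∀ w, γ * D ≤ infDist w S → u w ≤ M) {x : X} (hx : D ≤ infDist x S) :
    u x ≤ (1 - (1 / 2) ^ k) * M := by
  obtain ⟨z, rfl, hzk, hz⟩ := hplan x (hD.trans hx)
  have hmargin : γ * D ≤ γ * infDist (z 0) S := by gcongr
  exact hu.apply_le_of_chain hX hu₀ (A := {w | γ * D ≤ infDist w S}) hM
    (fun y hy ↦ hYS y hy.1 ((mul_pos hγ (hd.trans_le hD)).trans_le hy.2))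
    (fun i hi ↦ closedBall_subset_setOf_le_infDist (by linarith [hz i hi])) hzk

end GamePlan

/-- The game-plan lemma: if `0 ≤ F ≤ 1` on `Y` with support `S`, and from every point at
distance at least `dmin` from `S` there is a `k`-step plan `z₀, …, z_k` ending at a zero
of `F` on `Y` with `d(zᵢ, S) ≥ 2 d(zᵢ, z_{i-1}) + 2ε₀ + γ d(z₀, S)`, then every AM
extension `u` of `F` satisfies
`0 ≤ u(x) ≤ (1 - 2^{-k})^{log_γ (dmin / d(x,S))}`. -/
theorem stmt9 {X : Type*} [MetricSpace X] (hX : IsLengthSpace X)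
    (Y : Set X) (hY : Y.Nonempty) (F : X → ℝ)
    (hFc : ContinuousOn F Y) (hF01 : ∀ y ∈ Y, F y ∈ Set.Icc (0 : ℝ) 1)
    (S : Set X) (hS : S = Y ∩ closure {y | y ∈ Y ∧ F y ≠ 0})
    (k : ℕ) (hk : 1 ≤ k) (ε₀ dmin γ : ℝ)
    (hε₀ : 0 < ε₀) (hdmin : 0 < dmin) (hγ : γ ∈ Set.Ioo (0 : ℝ) 1)
    (hplan : ∀ x : X, dmin ≤ Metric.infDist x S →
      ∃ z : ℕ → X, z 0 = x ∧ z k ∈ Y ∧ F (z k) = 0 ∧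
        ∀ i : ℕ, 1 ≤ i → i ≤ k →
          2 * dist (z i) (z (i - 1)) + 2 * ε₀ + γ * Metric.infDist (z 0) S ≤
            Metric.infDist (z i) S)
    (u : X → ℝ) (hu : IsAMExtension Y F u) :
    ∀ x : X, 0 < Metric.infDist x S →
      0 ≤ u x ∧
        u x ≤ (1 - (1 / 2 : ℝ) ^ k) ^ Real.logb γ (dmin / Metric.infDist x S) := by
  have hu₀ : ∀ x, 0 ≤ u x := hu.le_apply hX hY fun y hy ↦ (hF01 y hy).1
  have hu₁ : ∀ x, u x ≤ 1 := hu.apply_le hX hY fun y hy ↦ (hF01 y hy).2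
  have hYS : ∀ y ∈ Y, 0 < infDist y S → u y = 0 := by
    intro y hy hpos
    by_contra hne
    rw [hu.2.1 hy] at hne
    have hyS : y ∈ S := hS ▸ ⟨hy, subset_closure ⟨hy, hne⟩⟩
    exact hpos.ne' (infDist_zero_of_mem hyS)
  have hplans : HasGamePlans S {w | u w = 0} k γ dmin := by
    intro x hx
    obtain ⟨z, rfl, hzY, hzF, hz⟩ := hplan x hx
    refine ⟨z, rfl, (hu.2.1 hzY).trans hzF, fun i hi ↦ ?_⟩
    have hi' := hz (i + 1) i.succ_pos hi
    rw [Nat.add_sub_cancel, dist_comm] at hi'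
    linarith
  have hq : 1 - (1 / 2 : ℝ) ^ k ∈ Ioc 0 1 :=
    ⟨sub_pos.2 (pow_lt_one₀ (by norm_num) (by norm_num) (Nat.one_le_iff_ne_zero.1 hk)),
      sub_le_self _ (by positivity)⟩
  exact fun x hx ↦ ⟨hu₀ x, apply_le_rpow_logb_of_contraction hdmin hγ hq hu₁
    (fun _ _ hD hM _ ↦ hplans.apply_le_mul hu hX hu₀ hYS hdmin hγ.1 hD hM) hx⟩

end
end
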